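/- arXiv:2406.18876 — 2 statements merged into one kernel-verified Lean document; each statement's English description precedes it below -/
import Mathlib

section
/- Let F₃ be the free group on x₁, x₂, x₃ and let φ be the automorphism induced by the Artin action of the braid σ₁² σ₂⁻¹ ∈ B₃: φ(x₁) = x₁x₃x₁x₃⁻¹x₁⁻¹, φ(x₂) = x₁x₃x₁⁻¹, φ(x₃) = x₃⁻¹x₂x₃. Then there exists a bi-ordering of F₃ invariant under φ. -/
open FreeGroup

/-- The automorphism of `F₃ = ⟨x₁,x₂,x₃⟩` induced by the Artin action of the braid
`σ₁² σ₂⁻¹ ∈ B₃` (generators indexed by `Fin 3`, so `x₁ = of 0`, `x₂ = of 1`, `x₃ = of 2`):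
`φ(x₁) = x₁x₃x₁x₃⁻¹x₁⁻¹`, `φ(x₂) = x₁x₃x₁⁻¹`, `φ(x₃) = x₃⁻¹x₂x₃`. -/
def phiMagic : FreeGroup (Fin 3) →* FreeGroup (Fin 3) :=
  FreeGroup.lift fun k =>
    if k = 0 then of 0 * of 2 * of 0 * (of 2)⁻¹ * (of 0)⁻¹
    else if k = 1 then of 0 * of 2 * (of 0)⁻¹
    else (of 2)⁻¹ * of 1 * of 2

namespace Magic

abbrev M := List ℤ → ℤ
abbrev N := FreeGroup ℤ

def Xop (i : ℤ) : Module.End ℤ M where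
  toFun f := fun w => match w with
    | [] => 0
    | j :: w => if j = i then f w else 0
  map_add' f g := by
    funext w; cases w with
    | nil => simp
    | cons j w => by_cases h : j = i <;> simp [h]
  map_smul' c f := by
    funext w; cases w with
    | nil => simp
    | cons j w => by_cases h : j = i <;> simp [h]

@[simp] theorem Xop_nil (i : ℤ) (f : M) : Xop i f [] = 0 := rfl
@[simp] theorem Xop_cons (i : ℤ) (f : M) (j : ℤ) (w : List ℤ) :
    Xop i f (j :: w) = if j = i then f w else 0 := rfl

def Vfun (i : ℤ) (f : M) : M
  | [] => f []
  | j :: w => f (j :: w) - if j = i then Vfun i f w else 0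

def Vop (i : ℤ) : Module.End ℤ M where
  toFun f := Vfun i f
  map_add' f g := by
    funext w; induction w with
    | nil => simp [Vfun]
    | cons j w ih =>
      simp only [Pi.add_apply] at ih
      by_cases h : j = i <;> simp [h, Vfun, ih] ; ring
  map_smul' c f := by
    funext w; induction w with
    | nil => simp [Vfun]
    | cons j w ih =>
      simp only [Pi.smul_apply, smul_eq_mul, RingHom.id_apply] at ih
      simp only [Vfun, ih, Pi.smul_apply, smul_eq_mul, RingHom.id_apply]
      split_ifs <;> ring

@[simp] theorem Vop_nil (i : ℤ) (f : M) : Vop i f [] = f [] := rfl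
@[simp] theorem Vop_cons (i : ℤ) (f : M) (j : ℤ) (w : List ℤ) :
    Vop i f (j :: w) = f (j :: w) - if j = i then Vop i f w else 0 := rfl

def E (i : ℤ) : (Module.End ℤ M)ˣ where
  val := 1 + Xop i
  inv := Vop i
  val_inv := by
    ext f w; cases w with
    | nil => simp
    | cons j w => simp
  inv_val := by
    ext f w; induction w with
    | nil => simp
    | cons j w ih =>
      simp only [Module.End.mul_apply, Module.End.one_apply] at ih
      rw [Module.End.mul_apply, Vop_cons, ih]
      simp

theorem E_apply (i : ℤ) (f : M) (w : List ℤ) :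
    ((E i : (Module.End ℤ M)ˣ) : Module.End ℤ M) f w = f w + Xop i f w := rfl
theorem Einv_apply (i : ℤ) (f : M) :
    (((E i)⁻¹ : (Module.End ℤ M)ˣ) : Module.End ℤ M) f = Vop i f := rfl

def rho : N →* (Module.End ℤ M)ˣ := FreeGroup.lift E

def act (g : N) : Module.End ℤ M := (rho g : Module.End ℤ M)

theorem act_mul (g h : N) (f : M) : act (g * h) f = act g (act h f) := by simp [act]
theorem act_one (f : M) : act 1 f = f := by simp [act]
theorem act_of (i : ℤ) (f : M) : act (FreeGroup.of i) f = f + Xop i f := by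
  simp [act, rho]; rfl
theorem act_of_inv (i : ℤ) (f : M) : act (FreeGroup.of i)⁻¹ f = Vop i f := by
  simp [act, rho]; rfl

def Ord (n : ℕ) (f : M) : Prop := ∀ w : List ℤ, w.length < n → f w = 0

theorem act_close (g : N) : ∀ (n : ℕ) (f : M), Ord n f → ∀ w : List ℤ, w.length ≤ n →
    act g f w = f w := by
  induction g using FreeGroup.induction_on with
  | C1 => intro n f _ w _; rw [act_one]
  | of i =>
    intro n f hf w hw
    change act (FreeGroup.of i) f w = _
    rw [act_of]
    cases w with
    | nil => simp
    | cons j w =>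
      have := hf w (by simpa using hw)
      simp [this]
  | inv_of i _ =>
    intro n f hf w hw
    change act (FreeGroup.of i)⁻¹ f w = _
    rw [act_of_inv]
    induction w with
    | nil => simp
    | cons j w ih =>
      have hw' : w.length < n := by simpa using hw
      have := hf w hw'
      simp [ih hw'.le, this]
  | mul x y hx hy =>
    intro n f hf w hw
    rw [act_mul, hx n _ _ w hw, hy n f hf w hw]
    intro u hu
    rw [hy n f hf u hu.le, hf u hu]

theorem act_ord (g : N) (n : ℕ) (f : M) (hf : Ord n f) : Ord n (act g f) := by
  intro u hu
  rw [act_close g n f hf u hu.le, hf u hu]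

/-- bounded letters -/
def Bd (f : M) : Prop := ∃ s : Finset ℤ, ∀ w : List ℤ, f w ≠ 0 → ∀ i ∈ w, i ∈ s

theorem act_bd (g : N) : ∀ f : M, Bd f → Bd (act g f) := by
  induction g using FreeGroup.induction_on with
  | C1 => intro f hf; rwa [act_one]
  | of i =>
    rintro f ⟨s, hs⟩
    refine ⟨insert i s, fun w hw k hk => ?_⟩
    change act (FreeGroup.of i) f w ≠ 0 at hw
    rw [act_of] at hw
    cases w with
    | nil => simp at hk
    | cons j w =>
      simp only [Pi.add_apply, Xop_cons] at hw
      by_cases h : f (j :: w) = 0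
      · by_cases hj : j = i
        · rw [h, if_pos hj, zero_add] at hw
          rcases List.mem_cons.1 hk with rfl | hk
          · simp [hj]
          · exact Finset.mem_insert_of_mem (hs w hw k hk)
        · simp [h, hj] at hw
      · exact Finset.mem_insert_of_mem (hs _ h k hk)
  | inv_of i _ =>
    rintro f ⟨s, hs⟩
    refine ⟨insert i s, fun w hw => ?_⟩
    change act (FreeGroup.of i)⁻¹ f w ≠ 0 at hw
    rw [act_of_inv] at hw
    induction w with
    | nil => simp
    | cons j w ih =>
      intro k hk
      simp only [Vop_cons] at hw
      by_cases h : f (j :: w) = 0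
      · by_cases hj : j = i
        · rw [h, if_pos hj, zero_sub, neg_ne_zero] at hw
          rcases List.mem_cons.1 hk with rfl | hk
          · simp [hj]
          · exact ih hw k hk
        · simp [h, hj] at hw
      · exact Finset.mem_insert_of_mem (hs _ h k hk)
  | mul x y hx hy =>
    intro f hf
    rw [act_mul]
    exact hx _ (hy _ hf)

def dl : M := fun w => if w = [] then 1 else 0

theorem dl_bd : Bd dl := ⟨∅, fun w hw i hi => by
  have : w = [] := by by_contra h; simp [dl, h] at hw
  simp [this] at hi⟩

/-! Magnus faithfulness -/

theorem Ezpow (i : ℤ) (k : ℤ) (f : M) (w : List ℤ) (hw : w.head? ≠ some i) :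
    (((E i ^ k : (Module.End ℤ M)ˣ) : Module.End ℤ M) f w = f w) ∧
    (((E i ^ k : (Module.End ℤ M)ˣ) : Module.End ℤ M) f (i :: w) = f (i :: w) + k * f w) := by
  induction k using Int.induction_on with
  | zero => simp
  | succ k ih =>
    have e : E i ^ ((k : ℤ) + 1) = E i * E i ^ (k : ℤ) := by
      rw [add_comm, zpow_add, zpow_one]
    rw [e]
    rw [Units.val_mul, Module.End.mul_apply, E_apply, E_apply, Xop_cons, if_pos rfl, ih.1, ih.2]
    refine ⟨?_, by ring⟩
    cases w with
    | nil => simp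
    | cons j w => simp at hw; simp [hw]
  | pred k ih =>
    have e : E i ^ (-(k : ℤ) - 1) = (E i)⁻¹ * E i ^ (-(k : ℤ)) := by
      rw [sub_eq_neg_add, zpow_add, zpow_neg_one]
    rw [e]
    rw [Units.val_mul, Module.End.mul_apply, Einv_apply, Vop_cons, if_pos rfl, ih.2]
    have : Vop i (((E i ^ (-(k : ℤ)) : (Module.End ℤ M)ˣ) : Module.End ℤ M) f) w = f w := by
      cases w with
      | nil => simpa using ih.1
      | cons j w =>
        have hj : j ≠ i := by simpa using hw
        rw [Vop_cons, if_neg hj, sub_zero, ih.1]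
    rw [this]
    exact ⟨rfl, by ring⟩

/-- no equal adjacent letters -/
def Alt (w : List ℤ) : Prop := w.IsChain (· ≠ ·)

def PP (i : ℤ) : Set M := {f | ∃ w : List ℤ, Alt w ∧ w.head? = some i ∧ f w ≠ 0 ∧
  ∀ u, Alt u → f u ≠ 0 → u.length ≤ w.length ∧ (u.length = w.length → u.head? = some i)}

theorem alt_cons {i : ℤ} {w : List ℤ} : Alt (i :: w) ↔ w.head? ≠ some i ∧ Alt w := by
  cases w with
  | nil => simp [Alt]
  | cons j w => simp [Alt, ne_comm]

theorem pp_step (i k : ℤ) (hk : k ≠ 0) (f : M) (w : List ℤ) (hw : Alt w) (hwi : w.head? ≠ some i)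
    (hfw : f w ≠ 0) (hu : ∀ u, Alt u → f u ≠ 0 →
      u.length ≤ w.length) :
    ((E i ^ k : (Module.End ℤ M)ˣ) : Module.End ℤ M) f ∈ PP i := by
  refine ⟨i :: w, alt_cons.2 ⟨hwi, hw⟩, rfl, ?_, ?_⟩
  · rw [(Ezpow i k f w hwi).2]
    have : f (i :: w) = 0 := by
      by_contra h
      have := hu _ (alt_cons.2 ⟨hwi, hw⟩) h
      simp at this
    rw [this, zero_add]
    exact mul_ne_zero hk hfw
  · intro u hua hne
    by_cases hui : u.head? = some i
    · refine ⟨?_, fun _ => hui⟩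
      obtain ⟨v, rfl⟩ : ∃ v, u = i :: v := by
        cases u with
        | nil => simp at hui
        | cons j v => simp at hui; exact ⟨v, by rw [hui]⟩
      have hv := alt_cons.1 hua
      rw [(Ezpow i k f v hv.1).2] at hne
      by_cases h : f (i :: v) = 0
      · have : f v ≠ 0 := by rintro h'; simp [h, h'] at hne
        have := hu v hv.2 this
        simpa using this
      · have := hu _ hua h
        simp at this ⊢; omega
    · rw [(Ezpow i k f u hui).1] at hne
      have := hu u hua hne
      refine ⟨by simp; omega, fun h => ?_⟩
      simp at h; omega

open Monoid in
theorem magnus_word {i j : ℤ} (w : CoprodI.NeWord (fun _ : ℤ => Multiplicative ℤ) i j) :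
    (∀ k, j ≠ k → ∀ f ∈ PP k,
      ((CoprodI.lift (fun i => zpowersHom _ (E i)) w.prod : (Module.End ℤ M)ˣ) : Module.End ℤ M) f
        ∈ PP i) ∧
      ((CoprodI.lift (fun i => zpowersHom _ (E i)) w.prod : (Module.End ℤ M)ˣ) : Module.End ℤ M) dl
        ∈ PP i := by
  induction w with
  | @singleton i x hx =>
    have hx' : Multiplicative.toAdd x ≠ 0 := hx
    simp only [CoprodI.NeWord.prod_singleton, CoprodI.lift_of, zpowersHom_apply]
    constructor
    · rintro k hk f ⟨w, h1, h2, h3, h4⟩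
      refine pp_step i _ hx' f w h1 ?_ h3 fun u hu hu' => (h4 u hu hu').1
      rw [h2]; simpa using hk.symm
    · refine pp_step i _ hx' dl [] (by simp [Alt]) (by simp) (by simp [dl]) ?_
      intro u _ hu
      by_contra h
      have : u ≠ [] := by rintro rfl; simp at h
      simp [dl, this] at hu
  | append w₁ hne w₂ ih₁ ih₂ =>
    simp only [CoprodI.NeWord.append_prod, _root_.map_mul, Units.val_mul, Module.End.mul_apply]
    exact ⟨fun k hk f hf => ih₁.1 _ hne _ (ih₂.1 k hk f hf), ih₁.1 _ hne _ ih₂.2⟩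

theorem dl_not_pp (i : ℤ) : dl ∉ PP i := by
  rintro ⟨w, _, h, h', _⟩
  have : w ≠ [] := by rintro rfl; simp at h
  simp [dl, this] at h'

open Monoid in
theorem magnus (g : N) (hg : act g dl = dl) : g = 1 := by
  let κ : N →* CoprodI (fun _ : ℤ => Multiplicative ℤ) :=
    FreeGroup.lift fun i => CoprodI.of (i := i) (Multiplicative.ofAdd (1 : ℤ))
  let l : CoprodI (fun _ : ℤ => Multiplicative ℤ) →* N :=
    CoprodI.lift fun i => zpowersHom _ (FreeGroup.of i)
  have hl : l.comp κ = MonoidHom.id N := by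
    ext i; simp [l, κ]
  have hr : (CoprodI.lift (fun i => zpowersHom _ (E i))).comp κ = rho := by
    apply FreeGroup.ext_hom; intro i; simp [κ, rho]
  have hgl : l (κ g) = g := DFunLike.congr_fun hl g
  by_cases h : CoprodI.Word.equiv (κ g) = CoprodI.Word.empty
  · have : κ g = 1 := by
      rw [← CoprodI.Word.equiv.symm_apply_apply (κ g), h]; rfl
    rw [← hgl, this, _root_.map_one]
  · exfalso
    obtain ⟨i, j, w, hw⟩ := CoprodI.NeWord.of_word _ h
    have hp : w.prod = κ g := by
      rw [CoprodI.NeWord.prod, hw]; exact CoprodI.Word.equiv.symm_apply_apply (κ g)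
    have := (magnus_word w).2
    rw [hp] at this
    have e : (CoprodI.lift (fun i => zpowersHom _ (E i))) (κ g) = rho g := DFunLike.congr_fun hr g
    rw [e] at this
    change act g dl ∈ _ at this
    rw [hg] at this
    exact dl_not_pp i this

abbrev R := MonoidAlgebra ℤ N

noncomputable def r : R →ₐ[ℤ] Module.End ℤ M :=
  MonoidAlgebra.lift ℤ (Module.End ℤ M) N ((Units.coeHom _).comp rho)

noncomputable def gg (g : N) : R := MonoidAlgebra.of ℤ N g

theorem gg_mul (g h : N) : gg (g * h) = gg g * gg h := _root_.map_mul _ _ _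
theorem gg_one : gg 1 = 1 := _root_.map_one _

theorem r_gg (g : N) : r (gg g) = act g := by
  simp only [r, gg, MonoidAlgebra.lift_of]; rfl

noncomputable def y (i : ℤ) : R := gg (FreeGroup.of i) - 1

theorem r_y (i : ℤ) (f : M) : r (y i) f = Xop i f := by
  simp [y, r_gg, act_of]

noncomputable def LL : (ℤ →₀ R) →+ R :=
  Finsupp.liftAddHom (fun i => AddMonoidHom.mulLeft (y i))

theorem LL_single (i : ℤ) (b : R) : LL (Finsupp.single i b) = y i * b := by
  simp [LL]

theorem LL_mul (x b : R) (hx : x ∈ LL.range) : x * b ∈ LL.range := by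
  obtain ⟨d, rfl⟩ := hx
  induction d using Finsupp.induction_linear with
  | zero => simp
  | add f g hf hg => rw [map_add, add_mul]; exact add_mem hf hg
  | single i a => exact ⟨Finsupp.single i (a * b), by rw [LL_single, LL_single, mul_assoc]⟩

theorem gg_mem (g : N) : gg g - 1 ∈ LL.range := by
  induction g using FreeGroup.induction_on with
  | C1 => rw [gg_one, sub_self]; exact zero_mem _
  | of i => exact ⟨Finsupp.single i 1, by rw [LL_single, mul_one]; rfl⟩
  | inv_of i h =>
    have e : gg (FreeGroup.of i)⁻¹ - 1 =
        -((gg (FreeGroup.of i) - 1) * gg (FreeGroup.of i)⁻¹) := by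
      rw [sub_mul, ← gg_mul, mul_inv_cancel, gg_one, one_mul]; abel
    change gg (FreeGroup.of i)⁻¹ - 1 ∈ _
    rw [e]
    exact neg_mem (LL_mul _ _ h)
  | mul a b ha hb =>
    have e : gg (a * b) - 1 = (gg a - 1) * gg b + (gg b - 1) := by
      rw [sub_mul, ← gg_mul, one_mul]; abel
    rw [e]
    exact add_mem (LL_mul _ _ ha) hb

theorem decomp (z : R) : ∃ a : ℤ, z - a • (1 : R) ∈ LL.range := by
  induction z using MonoidAlgebra.induction_on with
  | of g => exact ⟨1, by rw [one_smul]; exact gg_mem g⟩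
  | add f g hf hg =>
    obtain ⟨a, ha⟩ := hf
    obtain ⟨b, hb⟩ := hg
    refine ⟨a + b, ?_⟩
    have : f + g - (a + b) • (1 : R) = (f - a • 1) + (g - b • 1) := by rw [add_smul]; abel
    rw [this]; exact add_mem ha hb
  | smul c f hf =>
    obtain ⟨a, ha⟩ := hf
    refine ⟨c * a, ?_⟩
    have : c • f - (c * a) • (1 : R) = c • (f - a • 1) := by rw [smul_sub, mul_smul]
    rw [this]; exact zsmul_mem ha c

theorem LL_nil (d : ℤ →₀ R) (f : M) : r (LL d) f [] = 0 := by
  induction d using Finsupp.induction_linear with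
  | zero => simp
  | add f g hf hg => simp [hf, hg]
  | single i a => rw [LL_single, _root_.map_mul, Module.End.mul_apply, r_y, Xop_nil]

theorem LL_cons (d : ℤ →₀ R) (f : M) (j : ℤ) (w : List ℤ) :
    r (LL d) f (j :: w) = r (d j) f w := by
  induction d using Finsupp.induction_linear with
  | zero => simp
  | add f g hf hg => simp [hf, hg]
  | single i a =>
    rw [LL_single, _root_.map_mul, Module.End.mul_apply, r_y, Xop_cons]
    by_cases h : j = i
    · simp [h]
    · simp [h, Finsupp.single_apply, Ne.symm h]

noncomputable def psi (v : ℤ → N) (a : ℤ) : N →* N :=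
  FreeGroup.lift fun i => v i * FreeGroup.of (i + a) * (v i)⁻¹

noncomputable def Psi (v : ℤ → N) (a : ℤ) : R →ₐ[ℤ] R :=
  MonoidAlgebra.mapDomainAlgHom ℤ ℤ (psi v a)

theorem Psi_gg (v : ℤ → N) (a : ℤ) (g : N) : Psi v a (gg g) = gg (psi v a g) := by
  simp [Psi, gg]

theorem conj_close (u : N) (i : ℤ) (n : ℕ) (f : M) (hf : Ord n f) (w : List ℤ)
    (hw : w.length ≤ n + 1) :
    r (gg (u * FreeGroup.of i * u⁻¹) - 1) f w = Xop i f w := by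
  have e : gg (u * FreeGroup.of i * u⁻¹) - 1 = gg u * y i * gg u⁻¹ := by
    rw [y, mul_sub, sub_mul, mul_one, ← gg_mul, ← gg_mul, ← gg_mul, mul_inv_cancel, gg_one]
  rw [e, _root_.map_mul, _root_.map_mul, Module.End.mul_apply, Module.End.mul_apply, r_y, r_gg, r_gg]
  have h1 : Ord (n + 1) (Xop i (act u⁻¹ f)) := by
    intro w hw
    cases w with
    | nil => rfl
    | cons j w =>
      rw [Xop_cons, act_ord _ n f hf w (by simpa using hw)]; simp
  rw [act_close u (n + 1) _ h1 w hw]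
  cases w with
  | nil => rfl
  | cons j w => rw [Xop_cons, Xop_cons, act_close _ n f hf w (by simpa using hw)]

theorem Psi_LL (v : ℤ → N) (a : ℤ) (n : ℕ) (d : ℤ →₀ R)
    (hd : ∀ i, Ord n (r (Psi v a (d i)) dl)) :
    r (Psi v a (LL d)) dl [] = 0 ∧
    ∀ j w, w.length ≤ n → r (Psi v a (LL d)) dl (j :: w) = r (Psi v a (d (j - a))) dl w := by
  have key : LL d = ∑ i ∈ d.support, y i * d i := by
    simp [LL, Finsupp.sum]
  have hy : ∀ i, Psi v a (y i) = gg (v i * FreeGroup.of (i + a) * (v i)⁻¹) - 1 := by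
    intro i; rw [y, map_sub, _root_.map_one, Psi_gg, psi, FreeGroup.lift_apply_of]
  have key2 : ∀ w : List ℤ, w.length ≤ n + 1 → r (Psi v a (LL d)) dl w =
      ∑ i ∈ d.support, Xop (i + a) (r (Psi v a (d i)) dl) w := by
    intro w hw
    rw [key, map_sum, map_sum, LinearMap.sum_apply, Finset.sum_apply]
    refine Finset.sum_congr rfl fun i _ => ?_
    rw [_root_.map_mul, _root_.map_mul, Module.End.mul_apply, hy, conj_close _ _ n _ (hd i) w hw]
  refine ⟨?_, fun j w hw => ?_⟩
  · rw [key2 _ (by simp)]; simp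
  · rw [key2 _ (by simpa using hw)]
    simp only [Xop_cons]
    rw [Finset.sum_eq_single (j - a)]
    · simp
    · intro b _ hb
      rw [if_neg]; omega
    · intro h
      have : d (j - a) = 0 := by simpa using h
      simp [this]

def sh (a : ℤ) (w : List ℤ) : List ℤ := w.map (· - a)

theorem leading (v : ℤ → N) (a : ℤ) (n : ℕ) : ∀ z : R, Ord n (r z dl) →
    ∀ w : List ℤ, w.length ≤ n → r (Psi v a z) dl w = r z dl (sh a w) := by
  induction n with
  | zero =>
    intro z _ w hw
    have : w = [] := by simpa using hw
    subst this
    obtain ⟨b, d, hd⟩ := decomp z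
    have hz : z = b • 1 + LL d := by rw [hd]; abel
    have h0 := (Psi_LL v a 0 d (fun i w hw => by simp at hw)).1
    have h1 := LL_nil d dl
    rw [hz]
    simp [sh, h0, h1]
  | succ n ih =>
    intro z hz w hw
    obtain ⟨b, d, hd⟩ := decomp z
    have hz' : z = b • 1 + LL d := by rw [hd]; abel
    have hb : b = 0 := by
      have := hz [] (by simp)
      rw [hz'] at this
      simpa [LL_nil, dl] using this
    rw [hb, zero_smul, zero_add] at hz'
    subst hz'
    have hdo : ∀ i, Ord n (r (d i) dl) := by
      intro i w hw
      rw [← LL_cons]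
      exact hz _ (by simpa using hw)
    have hdo' : ∀ i, Ord n (r (Psi v a (d i)) dl) := by
      intro i w hw
      rw [ih _ (hdo i) w hw.le]
      exact hdo i _ (by simpa [sh] using hw)
    have := Psi_LL v a n d hdo'
    cases w with
    | nil => rw [this.1]; simp [sh, LL_nil]
    | cons j w =>
      rw [this.2 j w (by simpa using hw), ih _ (hdo _) w (by simpa using hw)]
      simp [sh, LL_cons]

def LPos (f : M) : Prop := ∃ w : List ℤ, 0 < f w ∧ Ord w.length f ∧
  ∀ u : List ℤ, u.length = w.length → u < w → f u = 0

theorem LPos.add {f g : M} (hf : LPos f) (hg : LPos g) : LPos (f + g) := by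
  obtain ⟨w, h1, h2, h3⟩ := hf
  obtain ⟨x, k1, k2, k3⟩ := hg
  rcases lt_trichotomy w.length x.length with h | h | h
  · refine ⟨w, ?_, ?_, ?_⟩
    · simp [k2 w h, h1]
    · intro u hu; simp [h2 u hu, k2 u (hu.trans h)]
    · intro u hu hl; simp [h3 u hu hl, k2 u (hu ▸ h)]
  · rcases lt_trichotomy w x with h' | h' | h'
    · refine ⟨w, ?_, ?_, ?_⟩
      · simp [k3 w h h', h1]
      · intro u hu; simp [h2 u hu, k2 u (h ▸ hu)]
      · intro u hu hl; simp [h3 u hu hl, k3 u (hu.trans h) (hl.trans h')]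
    · subst h'
      refine ⟨w, by simp only [Pi.add_apply]; omega, ?_, ?_⟩
      · intro u hu; simp [h2 u hu, k2 u hu]
      · intro u hu hl; simp [h3 u hu hl, k3 u hu hl]
    · refine ⟨x, ?_, ?_, ?_⟩
      · simp [h3 x h.symm h', k1]
      · intro u hu; simp [k2 u hu, h2 u (h ▸ hu)]
      · intro u hu hl; simp [k3 u hu hl, h3 u (hu.trans h.symm) (hl.trans h')]
  · refine ⟨x, ?_, ?_, ?_⟩
    · simp [h2 x h, k1]
    · intro u hu; simp [k2 u hu, h2 u (hu.trans h)]
    · intro u hu hl; simp [k3 u hu hl, h2 u (hu ▸ h)]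

theorem LPos.act {f : M} (hf : LPos f) (g : N) : LPos (act g f) := by
  obtain ⟨w, h1, h2, h3⟩ := hf
  refine ⟨w, ?_, act_ord g _ f h2, ?_⟩
  · rwa [act_close g _ f h2 w le_rfl]
  · intro u hu hl
    rw [act_close g _ f h2 u hu.le, h3 u hu hl]

theorem lpos_or (f : M) (hb : Bd f) (hf : f ≠ 0) : LPos f ∨ LPos (-f) := by
  obtain ⟨s, hs⟩ := hb
  have hex : ∃ n, ∃ w : List ℤ, w.length = n ∧ f w ≠ 0 := by
    obtain ⟨w, hw⟩ := Function.ne_iff.1 hf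
    exact ⟨_, w, rfl, hw⟩
  classical
  let n := Nat.find hex
  have hn : Ord n f := by
    intro w hw
    by_contra h
    exact Nat.find_min hex hw ⟨w, rfl, h⟩
  let S : Set (List ℤ) := {w | w.length = n ∧ f w ≠ 0}
  have hS : S.Finite := by
    refine ((List.finite_length_eq s n).image (List.map Subtype.val)).subset ?_
    rintro w ⟨h1, h2⟩
    have := hs w h2
    lift w to List s using this
    exact ⟨w, by simpa using h1, rfl⟩
  have hne : S.Nonempty := Nat.find_spec hex
  obtain ⟨w, hw, hmin⟩ := hS.exists_minimal hne
  have hmin' : ∀ u : List ℤ, u.length = w.length → u < w → f u = 0 := by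
    intro u hu hl
    by_contra h
    exact absurd (hmin ⟨hu.trans hw.1, h⟩ hl.le) (not_le.2 hl)
  have hn' : Ord w.length f := by rw [hw.1]; exact hn
  rcases lt_or_gt_of_ne hw.2 with h | h
  · right
    exact ⟨w, by simpa using h, fun u hu => by simp [hn' u hu], fun u hu hl => by
      simp [hmin' u hu hl]⟩
  · left
    exact ⟨w, h, hn', hmin'⟩

def PN (g : N) : Prop := LPos (act g dl - dl)

theorem PN_mul {g h : N} (hg : PN g) (hh : PN h) : PN (g * h) := by
  have : act (g * h) dl - dl = act g (act h dl - dl) + (act g dl - dl) := by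
    rw [act_mul, map_sub]; abel
  rw [PN, this]
  exact (LPos.act hh g).add hg

theorem PN_one : ¬ PN 1 := by
  rintro ⟨w, h, _⟩
  simp [act_one] at h

theorem PN_or (g : N) (hg : g ≠ 1) : PN g ∨ PN g⁻¹ := by
  have hb : Bd (act g dl - dl) := by
    obtain ⟨s, hs⟩ := act_bd g dl dl_bd
    obtain ⟨t, ht⟩ := dl_bd
    refine ⟨s ∪ t, fun w hw i hi => ?_⟩
    by_cases h : act g dl w = 0
    · have : dl w ≠ 0 := by intro h'; simp [h, h'] at hw
      exact Finset.mem_union_right _ (ht w this i hi)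
    · exact Finset.mem_union_left _ (hs w h i hi)
  rcases lpos_or _ hb (fun h => hg (magnus g (sub_eq_zero.1 h))) with h | h
  · exact Or.inl h
  · right
    have e : act g⁻¹ dl - dl = act g⁻¹ (-(act g dl - dl)) := by
      rw [map_neg, map_sub, ← act_mul, inv_mul_cancel, act_one]; abel
    rw [PN, e]
    exact h.act _

theorem PN_psi (v : ℤ → N) (a : ℤ) (g : N) (hg : PN g) : PN (psi v a g) := by
  obtain ⟨w, h1, h2, h3⟩ := hg
  have hz : ∀ g : N, act g dl - dl = r (gg g - 1) dl := by
    intro g; rw [map_sub, r_gg]; simp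
  have hP : gg (psi v a g) - 1 = Psi v a (gg g - 1) := by
    rw [map_sub, Psi_gg, _root_.map_one]
  rw [hz] at h1 h2 h3
  have key := leading v a _ _ h2
  rw [PN, hz, hP]
  have hws : sh a (sh (-a) w) = w := by simp [sh, Function.comp_def]
  have hl : (sh (-a) w).length = w.length := by simp [sh]
  refine ⟨sh (-a) w, ?_, ?_, ?_⟩
  · rw [key _ hl.le, hws]; exact h1
  · intro u hu
    rw [hl] at hu
    rw [key u hu.le]
    exact h2 _ (by simpa [sh] using hu)
  · intro u hu hlt
    rw [hl] at hu
    rw [key u hu.le]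
    refine h3 _ (by simpa [sh] using hu) ?_
    rw [← hws]
    exact List.map_lt (fun x y h => by omega) hlt

abbrev F := FreeGroup (Fin 3)

def tau : Multiplicative ℤ →* MulAut N where
  toFun k := FreeGroup.freeGroupCongr (Equiv.addRight (2 * Multiplicative.toAdd k))
  map_one' := by
    apply MulEquiv.toMonoidHom_injective
    apply FreeGroup.ext_hom; intro i; simp
  map_mul' k l := by
    apply MulEquiv.toMonoidHom_injective
    apply FreeGroup.ext_hom; intro i; simp; congr 1; ring

theorem tau_of (k : Multiplicative ℤ) (i : ℤ) :
    tau k (FreeGroup.of i) = FreeGroup.of (i + 2 * Multiplicative.toAdd k) := by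
  simp [tau]

abbrev G := N ⋊[tau] (Multiplicative ℤ)

def kap : F →* G := FreeGroup.lift fun k =>
  if k = 0 then SemidirectProduct.inr (Multiplicative.ofAdd 1)
  else if k = 1 then SemidirectProduct.inl (FreeGroup.of 1)
  else SemidirectProduct.inl (FreeGroup.of 0)

def theta : N →* F := FreeGroup.lift fun m =>
  (of 0) ^ (m / 2) * (if m % 2 = 0 then of 2 else of 1) * ((of 0) ^ (m / 2))⁻¹

theorem theta_even (k : ℤ) :
    theta (FreeGroup.of (2 * k)) = (of 0) ^ k * of 2 * ((of 0) ^ k)⁻¹ := by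
  have : 2 * k / 2 = k := by omega
  simp [theta, this]

theorem theta_odd (k : ℤ) :
    theta (FreeGroup.of (2 * k + 1)) = (of 0) ^ k * of 1 * ((of 0) ^ k)⁻¹ := by
  have : (2 * k + 1) / 2 = k := by omega
  have h : (2 * k + 1) % 2 = 1 := by omega
  simp [theta, this, h]

def lam : G →* F := SemidirectProduct.lift theta (zpowersHom _ (of 0)) (by
  intro g
  apply FreeGroup.ext_hom
  intro m
  simp only [MonoidHom.comp_apply, MulEquiv.coe_toMonoidHom, tau_of, MulAut.conj_apply,
    zpowersHom_apply]
  rcases Int.even_or_odd' m with ⟨k, rfl | rfl⟩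
  · rw [← mul_add, theta_even, theta_even, add_comm k, zpow_add]; group
  · rw [add_right_comm, ← mul_add, theta_odd, theta_odd, add_comm k, zpow_add]; group)

theorem lam_kap (g : F) : lam (kap g) = g := by
  have : lam.comp kap = MonoidHom.id F := by
    apply FreeGroup.ext_hom
    intro i
    fin_cases i
    · simp [lam, kap]
    · have := theta_odd 0
      simp at this
      simp [lam, kap, this]
    · have := theta_even 0
      simp at this
      simp [lam, kap, this]
  exact DFunLike.congr_fun this g

theorem kap_theta (n : N) : kap (theta n) = SemidirectProduct.inl n := by
  have : kap.comp theta = SemidirectProduct.inl := by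
    apply FreeGroup.ext_hom
    intro m
    have h0 : kap (of 0) = SemidirectProduct.inr (Multiplicative.ofAdd 1) := by simp [kap]
    have h1 : kap (of 1) = SemidirectProduct.inl (FreeGroup.of 1) := by simp [kap]
    have h2 : kap (of 2) = SemidirectProduct.inl (FreeGroup.of 0) := by simp [kap]
    rw [MonoidHom.comp_apply]
    rcases Int.even_or_odd' m with ⟨k, rfl | rfl⟩
    · rw [theta_even, _root_.map_mul, _root_.map_mul, _root_.map_inv, map_zpow, h0, h2, ← map_zpow, ← _root_.map_inv,
        ← SemidirectProduct.inl_aut, tau_of]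
      simp
    · rw [theta_odd, _root_.map_mul, _root_.map_mul, _root_.map_inv, map_zpow, h0, h1, ← map_zpow, ← _root_.map_inv,
        ← SemidirectProduct.inl_aut, tau_of]
      simp [add_comm]
  exact DFunLike.congr_fun this n

theorem decF (g : F) : g = theta (kap g).left * (of 0) ^ (Multiplicative.toAdd (kap g).right) := by
  conv_lhs => rw [← lam_kap g]
  rfl

theorem right_phi (g : F) : (kap (phiMagic g)).right = (kap g).right := by
  have : (SemidirectProduct.rightHom.comp kap).comp phiMagic =
      SemidirectProduct.rightHom.comp kap := by
    apply FreeGroup.ext_hom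
    intro i
    fin_cases i <;> simp [kap, phiMagic]
  exact DFunLike.congr_fun this g

theorem phi_theta : ∃ v : ℤ → N, ∀ n, phiMagic (theta n) = theta (psi v 1 n) := by
  have p0 : phiMagic (of 0) = of 0 * of 2 * of 0 * (of 2)⁻¹ * (of 0)⁻¹ := by simp [phiMagic]
  have p1 : phiMagic (of 1) = of 0 * of 2 * (of 0)⁻¹ := by simp [phiMagic]
  have p2 : phiMagic (of 2) = (of 2)⁻¹ * of 1 * of 2 := by simp [phiMagic]
  have hu : ∀ k : ℤ, ∃ u : N, phiMagic (of 0 ^ k) = theta u * of 0 ^ k := by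
    intro k
    refine ⟨(kap (phiMagic (of 0 ^ k))).left, (decF _).trans ?_⟩
    rw [right_phi]
    have : Multiplicative.toAdd (kap (of 0 ^ k)).right = k := by
      rw [map_zpow]
      have h0 : kap (of 0) = SemidirectProduct.inr (Multiplicative.ofAdd 1) := by simp [kap]
      rw [h0, ← map_zpow, SemidirectProduct.right_inr, toAdd_zpow]
      simp
    rw [this]
  have hv : ∀ m : ℤ, ∃ v : N, phiMagic (theta (FreeGroup.of m)) =
      theta (v * FreeGroup.of (m + 1) * v⁻¹) := by
    intro m
    rcases Int.even_or_odd' m with ⟨k, rfl | rfl⟩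
    · obtain ⟨u, hu⟩ := hu k
      refine ⟨u * (FreeGroup.of (2 * k))⁻¹, ?_⟩
      simp only [_root_.map_mul, _root_.map_inv, theta_even, theta_odd, hu, p2]
      group
    · obtain ⟨u, hu⟩ := hu k
      refine ⟨u, ?_⟩
      have e : 2 * k + 1 + 1 = 2 * (k + 1) := by ring
      simp only [e, _root_.map_mul, _root_.map_inv, theta_even, theta_odd, hu, p1, zpow_add_one]
      group
  choose v hv using hv
  refine ⟨v, fun n => ?_⟩
  have : phiMagic.comp theta = theta.comp (psi v 1) := by
    apply FreeGroup.ext_hom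
    intro m
    simp only [MonoidHom.comp_apply, hv, psi, FreeGroup.lift_apply_of]
  exact DFunLike.congr_fun this n

def PF (g : F) : Prop := 0 < Multiplicative.toAdd (kap g).right ∨
  ((kap g).right = 1 ∧ PN (kap g).left)

theorem kap_inl (g : F) (h : (kap g).right = 1) : kap g = SemidirectProduct.inl (kap g).left := by
  ext <;> simp [h]

theorem PF_one : ¬ PF 1 := by
  rintro (h | h)
  · simp at h
  · exact PN_one (by simpa using h.2)

theorem PF_mul {a b : F} (ha : PF a) (hb : PF b) : PF (a * b) := by
  simp only [PF, _root_.map_mul, SemidirectProduct.mul_right, toAdd_mul] at *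
  rcases ha with ha | ⟨ha, ha'⟩ <;> rcases hb with hb | ⟨hb, hb'⟩
  · left; omega
  · left; simpa [hb] using ha
  · left; simpa [ha] using hb
  · right
    refine ⟨by simp [ha, hb], ?_⟩
    rw [SemidirectProduct.mul_left, ha, _root_.map_one]
    exact PN_mul ha' hb'

theorem PF_or (g : F) (hg : g ≠ 1) : PF g ∨ PF g⁻¹ := by
  simp only [PF, _root_.map_inv, SemidirectProduct.inv_right, toAdd_inv]
  rcases lt_trichotomy (Multiplicative.toAdd (kap g).right) 0 with h | h | h
  · right; left; omega
  · have h : (kap g).right = 1 := h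
    have hne : (kap g).left ≠ 1 := by
      intro h'
      apply hg
      rw [decF g, h, h']; simp
    rcases PN_or _ hne with h' | h'
    · left; right; exact ⟨h, h'⟩
    · right; right
      refine ⟨by simp [h], ?_⟩
      rw [SemidirectProduct.inv_left, h, inv_one, _root_.map_one]
      exact h'
  · left; left; exact h

theorem PF_conj (x g : F) (hg : PF g) : PF (x * g * x⁻¹) := by
  have hr : (kap (x * g * x⁻¹)).right = (kap g).right := by
    simp only [_root_.map_mul, _root_.map_inv, SemidirectProduct.mul_right, SemidirectProduct.inv_right]
    rw [mul_comm, inv_mul_cancel_left]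
  unfold PF at *
  rw [hr]
  refine hg.imp id fun ⟨h1, h2⟩ => ⟨h1, ?_⟩
  have e : (kap (x * g * x⁻¹)).left = (kap x).left * tau (kap x).right (kap g).left *
      (kap x).left⁻¹ := by
    rw [_root_.map_mul, _root_.map_mul, _root_.map_inv, kap_inl g h1]
    simp
  have e2 : (kap x).left * tau (kap x).right (kap g).left * (kap x).left⁻¹ =
      psi (fun _ => (kap x).left) (2 * Multiplicative.toAdd (kap x).right) (kap g).left := by
    have : (MulAut.conj (kap x).left).toMonoidHom.comp (tau (kap x).right).toMonoidHom =
        psi (fun _ => (kap x).left) (2 * Multiplicative.toAdd (kap x).right) := by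
      apply FreeGroup.ext_hom
      intro m
      simp [psi, tau_of]
    exact DFunLike.congr_fun this _
  rw [e, e2]
  exact PN_psi _ _ _ h2

theorem PF_phi (g : F) (hg : PF g) : PF (phiMagic g) := by
  unfold PF at *
  rw [right_phi]
  refine hg.imp id fun ⟨h1, h2⟩ => ⟨h1, ?_⟩
  obtain ⟨v, hv⟩ := phi_theta
  have e : g = theta (kap g).left := by
    conv_lhs => rw [decF g, h1]
    simp
  have : (kap (phiMagic g)).left = psi v 1 (kap g).left := by
    conv_lhs => rw [e, hv, kap_theta]
    simp
  rw [this]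
  exact PN_psi _ _ _ h2

end Magic

/-- There is a bi-ordering of `F₃` invariant under the automorphism induced by the
braid `σ₁²σ₂⁻¹` (whose complement link is the magic manifold). -/
theorem stmt11 :
    ∃ lt : FreeGroup (Fin 3) → FreeGroup (Fin 3) → Prop,
      (∀ a, ¬ lt a a) ∧
      (∀ a b c, lt a b → lt b c → lt a c) ∧
      (∀ a b, a ≠ b → lt a b ∨ lt b a) ∧
      (∀ a b c, lt a b → lt (c * a) (c * b)) ∧
      (∀ a b c, lt a b → lt (a * c) (b * c)) ∧
      (∀ a b, lt a b ↔ lt (phiMagic a) (phiMagic b)) := by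
  have irr : ∀ a : FreeGroup (Fin 3), ¬ Magic.PF (a⁻¹ * a) := fun a => by
    rw [inv_mul_cancel]; exact Magic.PF_one
  have tr : ∀ a b c : FreeGroup (Fin 3), Magic.PF (a⁻¹ * b) → Magic.PF (b⁻¹ * c) →
      Magic.PF (a⁻¹ * c) := fun a b c h1 h2 => by
    have := Magic.PF_mul h1 h2
    rwa [show a⁻¹ * b * (b⁻¹ * c) = a⁻¹ * c by group] at this
  have tot : ∀ a b : FreeGroup (Fin 3), a ≠ b → Magic.PF (a⁻¹ * b) ∨ Magic.PF (b⁻¹ * a) :=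
    fun a b h => by
      have := Magic.PF_or (a⁻¹ * b) (fun h' => h (inv_mul_eq_one.1 h'))
      rwa [mul_inv_rev, inv_inv] at this
  have ph : ∀ a b : FreeGroup (Fin 3), Magic.PF (a⁻¹ * b) →
      Magic.PF ((phiMagic a)⁻¹ * phiMagic b) := fun a b h => by
    have := Magic.PF_phi _ h
    rwa [_root_.map_mul, _root_.map_inv] at this
  refine ⟨fun a b => Magic.PF (a⁻¹ * b), irr, tr, tot, ?_, ?_, ?_⟩
  · intro a b c h
    have e : (c * a)⁻¹ * (c * b) = a⁻¹ * b := by group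
    simpa only [e] using h
  · intro a b c h
    have := Magic.PF_conj c⁻¹ _ h
    have e : (a * c)⁻¹ * (b * c) = c⁻¹ * (a⁻¹ * b) * c⁻¹⁻¹ := by group
    simpa only [e] using this
  · intro a b
    refine ⟨ph a b, fun h => ?_⟩
    by_cases hab : a = b
    · subst hab; exact absurd h (irr _)
    · rcases tot a b hab with h' | h'
      · exact h'
      · exact absurd (tr _ _ _ h (ph b a h')) (irr _)
end

section
/- For every integer n, the braid σ₁² σ₂ⁿ ∈ B₃ induces (via the Artin action) an automorphism of the free group F₃ that preserves some bi-ordering of F₃. -/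
open FreeGroup

/-- The Artin action of `σ₁` on `F₃ = ⟨x₁,x₂,x₃⟩` (generators indexed by `Fin 3`):
`x₁ ↦ x₁x₂x₁⁻¹`, `x₂ ↦ x₁`, `x₃ ↦ x₃`. -/
def artinS1 : Monoid.End (FreeGroup (Fin 3)) :=
  FreeGroup.lift fun k =>
    if k = 0 then of 0 * of 1 * (of 0)⁻¹
    else if k = 1 then of 0
    else of 2

/-- The Artin action of `σ₂`: `x₂ ↦ x₂x₃x₂⁻¹`, `x₃ ↦ x₂`, `x₁ ↦ x₁`. -/
def artinS2 : Monoid.End (FreeGroup (Fin 3)) :=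
  FreeGroup.lift fun k =>
    if k = 1 then of 1 * of 2 * (of 1)⁻¹
    else if k = 2 then of 1
    else of 0

/-- The Artin action of `σ₂⁻¹`: `x₂ ↦ x₃`, `x₃ ↦ x₃⁻¹x₂x₃`, `x₁ ↦ x₁`. -/
def artinS2Inv : Monoid.End (FreeGroup (Fin 3)) :=
  FreeGroup.lift fun k =>
    if k = 1 then of 2
    else if k = 2 then (of 2)⁻¹ * of 1 * of 2
    else of 0

/-- The automorphism of `F₃` induced by the braid `σ₁² σ₂ⁿ` (`n ∈ ℤ`): as the Artin
action is a right action, one first applies `σ₁` twice and then `σ₂` `n` times. -/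
def braidAction (n : ℤ) : Monoid.End (FreeGroup (Fin 3)) :=
  (if 0 ≤ n then artinS2 ^ n.toNat else artinS2Inv ^ (-n).toNat) * artinS1 * artinS1

namespace Magnus

set_option linter.unusedSectionVars false
variable {I : Type} [LinearOrder I]

abbrev Op (I : Type) := Module.End ℤ (List I → ℤ)

def xfun (i : I) (f : List I → ℤ) : List I → ℤ
  | [] => 0
  | j :: w => if j = i then f w else 0

def X (i : I) : Op I where
  toFun := xfun i
  map_add' f g := by
    funext w; cases w with
    | nil => simp [xfun]
    | cons j w => simp only [xfun, Pi.add_apply]; split_ifs <;> simp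
  map_smul' c f := by
    funext w; cases w with
    | nil => simp [xfun]
    | cons j w => simp only [xfun, Pi.smul_apply, RingHom.id_apply]; split_ifs <;> simp

@[simp] lemma X_nil (i : I) (f : List I → ℤ) : X i f [] = 0 := rfl
@[simp] lemma X_cons (i j : I) (f : List I → ℤ) (w : List I) :
    X i f (j :: w) = if j = i then f w else 0 := rfl

def vfun (i : I) (f : List I → ℤ) : List I → ℤ
  | [] => f []
  | j :: w => f (j :: w) - if j = i then vfun i f w else 0

def V (i : I) : Op I where
  toFun := vfun i
  map_add' f g := by
    funext w; induction w with
    | nil => simp [vfun]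
    | cons j w ih =>
      simp only [vfun, Pi.add_apply] at ih ⊢; rw [ih]; split_ifs <;> ring
  map_smul' c f := by
    funext w; induction w with
    | nil => simp [vfun]
    | cons j w ih =>
      simp only [vfun, Pi.smul_apply, RingHom.id_apply, smul_eq_mul] at ih ⊢
      rw [ih]; split_ifs <;> ring

@[simp] lemma V_nil (i : I) (f : List I → ℤ) : V i f [] = f [] := rfl
@[simp] lemma V_cons (i j : I) (f : List I → ℤ) (w : List I) :
    V i f (j :: w) = f (j :: w) - if j = i then V i f w else 0 := rfl

def U (i : I) : (Op I)ˣ where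
  val := 1 + X i
  inv := V i
  val_inv := by
    refine LinearMap.ext fun f => funext fun w => ?_
    cases w with
    | nil => simp
    | cons j w => simp
  inv_val := by
    refine LinearMap.ext fun f => funext fun w => ?_
    induction w with
    | nil => simp
    | cons j w ih =>
      simp only [Module.End.mul_apply, Module.End.one_apply] at ih ⊢
      rw [V_cons, ih]
      simp

def rho : FreeGroup I →* (Op I)ˣ := FreeGroup.lift U

def R (g : FreeGroup I) : Op I := (rho g : (Op I)ˣ)

lemma R_one : R (1 : FreeGroup I) = 1 := by simp [R]
lemma R_mul (g h : FreeGroup I) : R (g * h) = R g * R h := by simp [R]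
lemma R_of (i : I) : R (FreeGroup.of i) = 1 + X i := by simp [R, rho, U]
lemma R_of_inv (i : I) : R (FreeGroup.of i)⁻¹ = V i := by simp [R, rho, U]
lemma R_inv_mul (g : FreeGroup I) : R g⁻¹ * R g = 1 := by simp [R]
lemma R_mul_inv (g : FreeGroup I) : R g * R g⁻¹ = 1 := by simp [R]

/-- operators raising the filtration by `k` -/
def E (I : Type) [LinearOrder I] (k : ℕ) : Submodule ℤ (Op I) where
  carrier := {T | ∀ n (f : List I → ℤ), (∀ w, w.length < n → f w = 0) →
    ∀ w, w.length < n + k → T f w = 0}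
  add_mem' := by
    intro S T hS hT n f hf w hw
    simp [hS n f hf w hw, hT n f hf w hw]
  zero_mem' := by intro n f hf w hw; simp
  smul_mem' := by
    intro c T hT n f hf w hw
    simp [hT n f hf w hw]

lemma E_mul {a b : ℕ} {S T : Op I} (hS : S ∈ E I a) (hT : T ∈ E I b) : S * T ∈ E I (a + b) := by
  intro n f hf w hw
  exact hS (n + b) (T f) (hT n f hf) w (by omega)

lemma E_mono {a b : ℕ} (h : b ≤ a) {S : Op I} (hS : S ∈ E I a) : S ∈ E I b :=
  fun n f hf w hw => hS n f hf w (by omega)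

lemma one_E : (1 : Op I) ∈ E I 0 := fun n f hf w hw => hf w (by simpa using hw)

lemma X_E (i : I) : X i ∈ E I 1 := by
  intro n f hf w hw
  cases w with
  | nil => simp
  | cons j w =>
    simp only [X_cons]; split_ifs
    · apply hf; simp at hw; omega
    · rfl

lemma V_E (i : I) : V i ∈ E I 0 := by
  intro n f hf w hw
  induction w with
  | nil => exact hf _ (by simpa using hw)
  | cons j w ih =>
    simp only [List.length_cons] at hw
    simp only [V_cons]
    rw [ih (by omega), hf _ (by simpa using hw)]; simp

lemma V_eq (i : I) : V i = 1 - V i * X i := by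
  have := (U i).inv_mul
  change V i * (1 + X i) = 1 at this
  rw [mul_add, mul_one] at this
  exact eq_sub_of_add_eq this

lemma R_E1 (g : FreeGroup I) : R g - 1 ∈ E I 1 := by
  induction g using FreeGroup.induction_on with
  | C1 => rw [R_one, sub_self]; exact zero_mem _
  | of i => rw [R_of, add_sub_cancel_left]; exact X_E i
  | inv_of i _ =>
    rw [R_of_inv, V_eq]
    have := (E I 1).neg_mem (by simpa using E_mul (V_E i) (X_E i))
    convert this using 1; abel
  | mul g h hg hh =>
    rw [R_mul]
    have h1 : R g * R h - 1 = (R g - 1) * (R h - 1) + (R g - 1) + (R h - 1) := by noncomm_ring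
    rw [h1]
    exact add_mem (add_mem (E_mono (by norm_num) (E_mul hg hh)) hg) hh

lemma R_E0 (g : FreeGroup I) : R g ∈ E I 0 := by
  have := add_mem (E_mono (by norm_num) (R_E1 g)) (one_E (I := I))
  simpa using this

/-- evaluation of noncommutative polynomials -/
noncomputable def ev (Y : I → Op I) : MonoidAlgebra ℤ (FreeMonoid I) →ₐ[ℤ] Op I :=
  MonoidAlgebra.lift ℤ (Op I) (FreeMonoid I) (FreeMonoid.lift Y)

lemma ev_apply (Y : I → Op I) (p : MonoidAlgebra ℤ (FreeMonoid I)) :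
    ev Y p = p.coeff.sum fun w c => c • ((FreeMonoid.toList w).map Y).prod := by
  rw [ev, MonoidAlgebra.lift_apply]; simp [FreeMonoid.lift_apply]

lemma ev_var (Y : I → Op I) (i : I) :
    ev Y (MonoidAlgebra.of ℤ _ (FreeMonoid.of i)) = Y i := by
  rw [ev, MonoidAlgebra.lift_of]; simp

lemma prod_E (Y : I → Op I) (hY : ∀ i, Y i ∈ E I 1) (w : List I) :
    (w.map Y).prod ∈ E I w.length := by
  induction w with
  | nil => simpa using one_E
  | cons i w ih =>
    simp only [List.map_cons, List.prod_cons, List.length_cons]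
    rw [add_comm]; exact E_mul (hY i) ih

lemma ev_E (Y : I → Op I) (hY : ∀ i, Y i ∈ E I 1) (p : MonoidAlgebra ℤ (FreeMonoid I)) :
    ev Y p ∈ E I 0 := by
  rw [ev_apply]
  exact Submodule.sum_mem _ fun w _ => Submodule.smul_mem _ _
    (E_mono (Nat.zero_le _) (prod_E Y hY _))

lemma pow_E {T : Op I} (hT : T ∈ E I 1) (n : ℕ) : T ^ n ∈ E I n := by
  induction n with
  | zero => simpa using one_E
  | succ n ih => rw [pow_succ]; exact E_mul ih hT

/-- geometric series approximating an inverse -/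
lemma inv_approx {T S : Op I} (hT : T - 1 ∈ E I 1) (hS : S ∈ E I 0) (h : S * T = 1) (n : ℕ) :
    S - ∑ k ∈ Finset.range n, (-(T - 1)) ^ k ∈ E I n := by
  have h1 : (1 - -(T - 1)) * ∑ k ∈ Finset.range n, (-(T - 1)) ^ k = 1 - (-(T-1)) ^ n :=
    mul_neg_geom_sum _ _
  have h2 : S - ∑ k ∈ Finset.range n, (-(T - 1)) ^ k = S * (-(T-1)) ^ n := by
    have h3 : (1 - -(T - 1)) = T := by abel
    rw [h3] at h1
    have h4 := congrArg (S * ·) h1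
    simp only [← mul_assoc, h, one_mul] at h4
    rw [h4]; noncomm_ring
  rw [h2]
  simpa using E_mul hS (pow_E (neg_mem hT) n)

lemma approx (ψ : FreeGroup I →* FreeGroup I) (n : ℕ) (g : FreeGroup I) :
    ∃ p : MonoidAlgebra ℤ (FreeMonoid I),
      R g - ev X p ∈ E I n ∧ R (ψ g) - ev (fun i => R (ψ (FreeGroup.of i)) - 1) p ∈ E I n := by
  have hY : ∀ i, (fun i => R (ψ (FreeGroup.of i)) - 1) i ∈ E I 1 := fun i => R_E1 _
  induction g using FreeGroup.induction_on with
  | C1 => exact ⟨1, by simp [R_one], by simp [R_one]⟩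
  | of i =>
    refine ⟨1 + MonoidAlgebra.of ℤ _ (FreeMonoid.of i), ?_, ?_⟩
    · rw [map_add, _root_.map_one, ev_var, R_of, sub_self]; exact zero_mem _
    · rw [map_add, _root_.map_one, ev_var]; simp
  | inv_of i _ =>
    refine ⟨∑ k ∈ Finset.range n, (-MonoidAlgebra.of ℤ _ (FreeMonoid.of i)) ^ k, ?_, ?_⟩
    · have := inv_approx (R_E1 (FreeGroup.of i)) (R_E0 (FreeGroup.of i)⁻¹) (R_inv_mul _) n
      simp only [map_sum, map_pow, map_neg, ev_var]
      simpa [R_of] using this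
    · have := inv_approx (R_E1 (ψ (FreeGroup.of i))) (R_E0 (ψ (FreeGroup.of i))⁻¹) (R_inv_mul _) n
      simp only [map_sum, map_pow, map_neg, ev_var, _root_.map_inv]
      exact this
  | mul g h hg hh =>
    obtain ⟨p, hp1, hp2⟩ := hg
    obtain ⟨q, hq1, hq2⟩ := hh
    have key : ∀ A B P Q : Op I, B ∈ E I 0 → P ∈ E I 0 → A - P ∈ E I n → B - Q ∈ E I n →
        A * B - P * Q ∈ E I n := by
      intro A B P Q hB hP h1 h2
      have : A * B - P * Q = (A - P) * B + P * (B - Q) := by noncomm_ring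
      rw [this]
      exact add_mem (by simpa using E_mul h1 hB) (by simpa using E_mul hP h2)
    refine ⟨p * q, ?_, ?_⟩
    · rw [R_mul, _root_.map_mul]; exact key _ _ _ _ (R_E0 _) (ev_E _ X_E _) hp1 hq1
    · rw [_root_.map_mul, R_mul, _root_.map_mul]; exact key _ _ _ _ (R_E0 _) (ev_E _ hY _) hp2 hq2

def dl : List I → ℤ := fun w => if w = [] then 1 else 0

/-- Magnus coefficient -/
def co (g : FreeGroup I) (w : List I) : ℤ := R g dl w

lemma E_dl {n : ℕ} {T : Op I} (hT : T ∈ E I n) {w : List I} (hw : w.length < n) : T dl w = 0 :=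
  hT 0 dl (by simp) w (by omega)

lemma prodX_dl (w v : List I) : (w.map X).prod dl v = if v = w then 1 else 0 := by
  induction w generalizing v with
  | nil => simp [dl]
  | cons i w ih =>
    cases v with
    | nil => simp
    | cons j v => simp [ih]; split_ifs <;> simp_all

lemma prod_diff (Y Z : I → Op I) (hY : ∀ i, Y i ∈ E I 1) (hZ : ∀ i, Z i ∈ E I 1)
    (h : ∀ i, Y i - Z i ∈ E I 2) (w : List I) :
    (w.map Y).prod - (w.map Z).prod ∈ E I (w.length + 1) := by
  induction w with
  | nil => simp
  | cons i w ih =>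
    simp only [List.map_cons, List.prod_cons, List.length_cons]
    have : Y i * (w.map Y).prod - Z i * (w.map Z).prod =
      (Y i - Z i) * (w.map Y).prod + Z i * ((w.map Y).prod - (w.map Z).prod) := by noncomm_ring
    rw [this]
    exact add_mem (E_mono (by omega) (E_mul (h i) (prod_E Y hY w)))
      (E_mono (by omega) (E_mul (hZ i) ih))

lemma evX_dl (p : MonoidAlgebra ℤ (FreeMonoid I)) (v : List I) :
    ev X p dl v = p.coeff (FreeMonoid.ofList v) := by
  rw [ev_apply, Finsupp.sum, LinearMap.sum_apply, Finset.sum_apply]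
  simp only [LinearMap.smul_apply, Pi.smul_apply, prodX_dl, smul_eq_mul, mul_ite, mul_one, mul_zero]
  rw [Finset.sum_eq_single (FreeMonoid.ofList v)]
  · simp
  · intro b _ hb
    rw [if_neg]; rintro rfl; exact hb rfl
  · intro h; simpa using h

lemma conj_diff (c : FreeGroup I) (k : I) :
    R (c * FreeGroup.of k * c⁻¹) - 1 - X k ∈ E I 2 := by
  have h1 : R (c * FreeGroup.of k * c⁻¹) - 1 - X k =
      (R c - 1) * (X k * R c⁻¹) + X k * (R c⁻¹ - 1) := by
    rw [R_mul, R_mul, R_of]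
    have := R_mul_inv c
    have e : R c * (1 + X k) * R c⁻¹ = R c * R c⁻¹ + R c * X k * R c⁻¹ := by noncomm_ring
    rw [e, this]; noncomm_ring
  rw [h1]
  exact add_mem (E_mul (R_E1 c) (by simpa using E_mul (X_E k) (R_E0 c⁻¹)))
    (E_mul (X_E k) (R_E1 _))

lemma fin_supp (g : FreeGroup I) (n : ℕ) : {w : List I | w.length = n ∧ co g w ≠ 0}.Finite := by
  obtain ⟨p, hp, -⟩ := approx (MonoidHom.id _) (n + 1) g
  refine (p.coeff.support.finite_toSet.image FreeMonoid.toList).subset ?_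
  rintro w ⟨hw, h⟩
  refine ⟨FreeMonoid.ofList w, ?_, rfl⟩
  have := E_dl hp (w := w) (by omega)
  rw [LinearMap.sub_apply, Pi.sub_apply, evX_dl, sub_eq_zero] at this
  rw [Finset.mem_coe, Finsupp.mem_support_iff, ← this]
  exact h

lemma co_psi (ψ : FreeGroup I →* FreeGroup I) (π : I → I)
    (hψ : ∀ i, ∃ c, ψ (FreeGroup.of i) = c * FreeGroup.of (π i) * c⁻¹)
    (g : FreeGroup I) (n : ℕ) (hg : ∀ w : List I, w ≠ [] → w.length < n → co g w = 0)
    (hπ : Function.Injective π) (v : List I) (hv0 : v ≠ []) (hv : v.length ≤ n) :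
    (∀ w : List I, v = w.map π → co (ψ g) v = co g w) ∧
    ((∀ w : List I, v ≠ w.map π) → co (ψ g) v = 0) := by
  obtain ⟨p, hp1, hp2⟩ := approx ψ (n + 1) g
  set Y : I → Op I := fun i => R (ψ (FreeGroup.of i)) - 1 with hYdef
  have hY : ∀ i, Y i ∈ E I 1 := fun i => R_E1 _
  have hYX : ∀ i, Y i - X (π i) ∈ E I 2 := by
    intro i
    obtain ⟨c, hc⟩ := hψ i
    rw [hYdef]; simp only [hc]; exact conj_diff c (π i)
  have hp : ∀ w : List I, w.length ≤ n → co g w = p.coeff (FreeMonoid.ofList w) := by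
    intro w hw
    have := E_dl hp1 (w := w) (by omega)
    rwa [LinearMap.sub_apply, Pi.sub_apply, evX_dl, sub_eq_zero] at this
  have h2 : co (ψ g) v = ev Y p dl v := by
    have := E_dl hp2 (w := v) (by omega)
    rwa [LinearMap.sub_apply, Pi.sub_apply, sub_eq_zero] at this
  have h3 : ev Y p dl v = ∑ w ∈ p.coeff.support,
      p.coeff w * (if v = (FreeMonoid.toList w).map π then 1 else 0) := by
    rw [ev_apply, Finsupp.sum, LinearMap.sum_apply, Finset.sum_apply]
    refine Finset.sum_congr rfl fun w hw => ?_
    simp only [LinearMap.smul_apply, Pi.smul_apply, smul_eq_mul]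
    by_cases hl : v.length ≤ (FreeMonoid.toList w).length
    · have := E_dl (prod_diff Y (fun i => X (π i)) hY (fun i => X_E _) hYX (FreeMonoid.toList w))
        (w := v) (by omega)
      rw [LinearMap.sub_apply, Pi.sub_apply, sub_eq_zero] at this
      rw [this, ← prodX_dl, List.map_map]; rfl
    · by_cases h0 : FreeMonoid.toList w = []
      · rw [h0]; simp [dl]
      · have := hp (FreeMonoid.toList w) (by omega)
        rw [hg _ h0 (by omega)] at this
        simp only [FreeMonoid.ofList_toList] at this
        rw [← this]; simp
  rw [h2, h3]
  constructor
  · rintro w rfl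
    rw [hp w (by simpa using hv), Finset.sum_eq_single (FreeMonoid.ofList w)]
    · simp
    · intro b _ hb
      rw [if_neg, mul_zero]
      intro h
      exact hb (congrArg FreeMonoid.ofList (hπ.list_map h).symm)
    · intro h; simp at h; simp [h]
  · intro h
    exact Finset.sum_eq_zero fun w _ => by rw [if_neg (h _), mul_zero]

lemma co_one (w : List I) (hw : w ≠ []) : co (1 : FreeGroup I) w = 0 := by
  simp [co, R_one, dl, hw]

lemma co_mul (g h : FreeGroup I) (n : ℕ) (hh : ∀ w : List I, w ≠ [] → w.length < n → co h w = 0)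
    (w : List I) (hw0 : w ≠ []) (hw : w.length ≤ n) : co (g * h) w = co g w + co h w := by
  have hnil : co h [] = 1 := by
    have := E_dl (R_E1 h) (w := []) (by simp)
    rw [LinearMap.sub_apply, Pi.sub_apply, sub_eq_zero] at this
    rw [co, this]; simp [dl]
  have h1 := R_E1 g n (R h dl - dl) (by
    intro u hu
    by_cases h0 : u = []
    · subst h0
      rw [Pi.sub_apply]; change co h [] - _ = 0; rw [hnil]; simp [dl]
    · rw [Pi.sub_apply]; change co h u - _ = 0; rw [hh u h0 hu]; simp [dl, h0]) w (by omega)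
  simp only [map_sub, LinearMap.sub_apply, Module.End.one_apply, Pi.sub_apply] at h1
  have h2 : dl w = 0 := by simp [dl, hw0]
  simp only [co, R_mul, Module.End.mul_apply]
  rw [h2] at h1; linarith

lemma U_co (b : Bool) (i : I) (f : List I → ℤ) (j : I) (w : List I) (hw : w.head? ≠ some i) :
    R (FreeGroup.mk [(i, b)]) f (j :: w) =
      f (j :: w) + if j = i then (if b then 1 else -1) * f w else 0 := by
  cases b
  · have : FreeGroup.mk [(i, false)] = (FreeGroup.of i)⁻¹ := rfl
    rw [this, R_of_inv, V_cons]
    have : V i f w = f w := by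
      cases w with
      | nil => simp
      | cons k w => simp at hw; simp [hw]
    rw [this]; split_ifs <;> simp_all [sub_eq_add_neg]
  · have : FreeGroup.mk [(i, true)] = FreeGroup.of i := rfl
    rw [this, R_of]; simp

lemma U_co_ne (b : Bool) (i : I) (f : List I → ℤ) (w : List I) (hw : w.head? ≠ some i) :
    R (FreeGroup.mk [(i, b)]) f w = f w := by
  cases b
  · have : FreeGroup.mk [(i, false)] = (FreeGroup.of i)⁻¹ := rfl
    rw [this, R_of_inv]
    cases w with
    | nil => simp
    | cons k w => simp at hw; simp [hw]
  · have : FreeGroup.mk [(i, true)] = FreeGroup.of i := rfl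
    rw [this, R_of]
    cases w with
    | nil => simp
    | cons k w => simp at hw; simp [hw]

lemma faithful_aux (L : List (I × Bool)) (i : I) (b : Bool)
    (hL : FreeGroup.IsReduced ((i, b) :: L)) :
    ∃ (w : List I) (e : ℤ), w.head? ≠ some i ∧ w.IsChain (· ≠ ·) ∧ 0 < (if b then 1 else -1) * e ∧
      co (FreeGroup.mk ((i, b) :: L)) w ≠ 0 ∧
      co (FreeGroup.mk ((i, b) :: L)) (i :: w) = e * co (FreeGroup.mk ((i, b) :: L)) w ∧
      ∀ v : List I, v.IsChain (· ≠ ·) → w.length + 1 ≤ v.length →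
        (v.head? = some i → w.length + 1 < v.length) →
        co (FreeGroup.mk ((i, b) :: L)) v = 0 := by
  induction L generalizing i b with
  | nil =>
    refine ⟨[], if b then 1 else -1, by simp, by simp, by cases b <;> simp, ?_, ?_, ?_⟩
    · rw [co, U_co_ne _ _ _ _ (by simp)]; simp [dl]
    · rw [co, co, U_co_ne b i dl [] (by simp), U_co b i dl i [] (by simp)]; simp [dl]
    · intro v hv hl hl2
      match v, hv, hl, hl2 with
      | [j], hv, _, hl2 =>
        have hj : j ≠ i := fun h => by simp [h] at hl2
        rw [co, U_co_ne _ _ _ _ (by simpa using hj)]; simp [dl]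
      | j :: k :: v, hv, _, _ =>
        rw [List.isChain_cons_cons] at hv
        by_cases hk : k = i
        · rw [co, U_co_ne _ _ _ _ (by simpa using fun h : j = i => hv.1 (h.trans hk.symm))]
          simp [dl]
        · rw [co, U_co _ _ _ _ _ (by simpa using hk)]; simp [dl]
  | cons a L ih =>
    obtain ⟨i', b'⟩ := a
    rw [FreeGroup.IsReduced, List.isChain_cons_cons] at hL
    obtain ⟨w, e, hw, hc, he, h0, h1, h2⟩ := ih i' b' hL.2
    set f := R (FreeGroup.mk ((i', b') :: L)) dl with hf
    have hfc : ∀ v, co (FreeGroup.mk ((i', b') :: L)) v = f v := fun v => rfl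
    have hgc : ∀ v, co (FreeGroup.mk ((i, b) :: (i', b') :: L)) v =
        R (FreeGroup.mk [(i, b)]) f v := by
      intro v
      have : FreeGroup.mk ((i, b) :: (i', b') :: L) =
        FreeGroup.mk [(i, b)] * FreeGroup.mk ((i', b') :: L) := by
          rw [FreeGroup.mul_mk]; rfl
      rw [co, this, R_mul]; rfl
    simp only [hfc] at h0 h1 h2
    simp only [hgc]
    have htail : ∀ v : List I, v.IsChain (· ≠ ·) → v.head? = some i →
        f v = 0 → f v.tail = 0 → R (FreeGroup.mk [(i, b)]) f v = 0 := by
      intro v hv hh e1 e2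
      match v, hv with
      | [j], hv => rw [U_co _ _ _ _ _ (by simp), e1]; simp at e2; simp [e2]
      | j :: k :: v, hv =>
        simp only [List.head?_cons, Option.some.injEq] at hh
        subst hh
        rw [List.isChain_cons_cons] at hv
        rw [U_co _ _ _ _ _ (by simpa using fun h : k = j => hv.1 h.symm), e1]
        simp only [List.tail_cons] at e2
        simp [e2]
    have hhead : ∀ v : List I, v.IsChain (· ≠ ·) → v.head? = some i → v.tail.head? ≠ some i := by
      intro v hv hh
      match v, hv with
      | [j], hv => simp
      | j :: k :: v, hv =>
        simp only [List.head?_cons, Option.some.injEq] at hh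
        subst hh
        rw [List.isChain_cons_cons] at hv
        simpa using fun h : k = j => hv.1 h.symm
    by_cases hi : i = i'
    · subst hi
      have hb : b = b' := hL.1 rfl
      subst hb
      refine ⟨w, e + if b then 1 else -1, hw, hc, ?_, ?_, ?_, ?_⟩
      · cases b <;> simp at he ⊢ <;> linarith
      · rwa [U_co_ne _ _ _ _ hw]
      · rw [U_co_ne _ _ _ _ hw, U_co _ _ _ _ _ hw, h1, if_pos rfl]; ring
      · intro v hv hl hl2
        by_cases hh : v.head? = some i
        · refine htail v hv hh (h2 v hv hl hl2) (h2 _ hv.tail ?_ ?_)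
          · have := hl2 hh
            simp; omega
          · intro h; exact absurd h (hhead v hv hh)
        · rw [U_co_ne _ _ _ _ hh, h2 v hv hl hl2]
    · have hne : f (i' :: w) ≠ 0 := by
        rw [h1]; refine mul_ne_zero ?_ h0
        rintro rfl; simp at he
      have hch : (i' :: w).IsChain (· ≠ ·) := by
        cases w with
        | nil => simp
        | cons k w => exact List.isChain_cons_cons.2 ⟨by simpa using fun h : i' = k => hw (by simp [h]), hc⟩
      have hhd : (i' :: w).head? ≠ some i := by simpa using fun h : i' = i => hi h.symm
      refine ⟨i' :: w, if b then 1 else -1, hhd, hch, by cases b <;> simp, ?_, ?_, ?_⟩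
      · rwa [U_co_ne _ _ _ _ hhd]
      · rw [U_co_ne _ _ _ _ hhd, U_co _ _ _ _ _ hhd,
          h2 (i :: i' :: w) (List.isChain_cons_cons.2 ⟨hi, hch⟩) (by simp) (by simp)]
        simp
      · intro v hv hl hl2
        simp only [List.length_cons] at hl hl2
        by_cases hh : v.head? = some i
        · have := hl2 hh
          refine htail v hv hh (h2 v hv (by omega) fun _ => by omega) (h2 _ hv.tail ?_ ?_)
          · simp; omega
          · intro _; simp; omega
        · rw [U_co_ne _ _ _ _ hh, h2 v hv (by omega) fun _ => by omega]

lemma faithful (g : FreeGroup I) (hg : g ≠ 1) : ∃ w : List I, w ≠ [] ∧ co g w ≠ 0 := by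
  have h1 := FreeGroup.isReduced_toWord (x := g)
  have h2 := FreeGroup.mk_toWord (x := g)
  have h3 : g.toWord ≠ [] := fun h => hg (FreeGroup.toWord_eq_nil_iff.1 h)
  match hL : g.toWord, h3 with
  | (i, b) :: L, _ =>
    rw [hL] at h1 h2
    obtain ⟨w, e, -, -, he, h0, h4, -⟩ := faithful_aux L i b h1
    rw [h2] at h0 h4
    refine ⟨i :: w, by simp, ?_⟩
    rw [h4]; refine mul_ne_zero ?_ h0
    rintro rfl; simp at he

def key (w : List I) : ℕ ×ₗ List I := toLex (w.length, w)

lemma key_lt {v w : List I} : key v < key w ↔ v.length < w.length ∨ v.length = w.length ∧ v < w := by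
  simp [key, Prod.Lex.toLex_lt_toLex]

def Pos (g : FreeGroup I) : Prop :=
  ∃ w : List I, w ≠ [] ∧ (∀ v : List I, v ≠ [] → key v < key w → co g v = 0) ∧ 0 < co g w

lemma not_pos_one : ¬ Pos (1 : FreeGroup I) := by
  rintro ⟨w, h, -, h2⟩
  rw [co_one w h] at h2; exact lt_irrefl _ h2

lemma pos_mul {g h : FreeGroup I} (hg : Pos g) (hh : Pos h) : Pos (g * h) := by
  obtain ⟨w, w0, w1, w2⟩ := hg
  obtain ⟨v, v0, v1, v2⟩ := hh
  have hm := co_mul g h v.length (fun u u0 hu => v1 u u0 (key_lt.2 (Or.inl hu)))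
  have hle : ∀ u : List I, key u ≤ key v → u.length ≤ v.length := by
    intro u hu
    rcases hu.lt_or_eq with hu | hu
    · rw [key_lt] at hu; omega
    · simp [key] at hu; simp [hu]
  rcases lt_trichotomy (key w) (key v) with hlt | heq | hlt
  · refine ⟨w, w0, fun u u0 hu => ?_, ?_⟩
    · rw [hm u u0 (hle u (hu.trans hlt).le), w1 u u0 hu, v1 u u0 (hu.trans hlt)]; rfl
    · rw [hm w w0 (hle w hlt.le), v1 w w0 hlt]; simpa using w2
  · have : w = v := by simp [key] at heq; exact heq.2
    subst this
    refine ⟨w, w0, fun u u0 hu => ?_, ?_⟩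
    · rw [hm u u0 (hle u hu.le), w1 u u0 hu, v1 u u0 hu]; rfl
    · rw [hm w w0 le_rfl]; omega
  · refine ⟨v, v0, fun u u0 hu => ?_, ?_⟩
    · rw [hm u u0 (hle u hu.le), w1 u u0 (hu.trans hlt), v1 u u0 hu]; rfl
    · rw [hm v v0 le_rfl, w1 v v0 hlt]; simpa using v2

lemma pos_total (g : FreeGroup I) (hg : g ≠ 1) : Pos g ∨ Pos g⁻¹ := by
  classical
  have hex : ∃ n, ∃ w : List I, w ≠ [] ∧ w.length = n ∧ co g w ≠ 0 := by
    obtain ⟨w, h0, h1⟩ := faithful g hg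
    exact ⟨_, w, h0, rfl, h1⟩
  obtain ⟨w0, hw0, hwl, hwc⟩ := Nat.find_spec hex
  set n := Nat.find hex with hn
  have hlow : ∀ w : List I, w ≠ [] → w.length < n → co g w = 0 := by
    intro w hw hl
    by_contra hc
    exact Nat.find_min hex hl ⟨w, hw, rfl, hc⟩
  obtain ⟨w, hw, hmin⟩ := Set.exists_min_image _ id (fin_supp g n) ⟨w0, hwl, hwc⟩
  have hwne : w ≠ [] := by
    rintro rfl
    have := hw.1
    rw [← hwl] at this
    exact hw0 (List.length_eq_zero_iff.1 this.symm)
  have hbelow : ∀ v : List I, v ≠ [] → key v < key w → co g v = 0 := by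
    intro v hv hk
    rw [key_lt, hw.1] at hk
    rcases hk with hk | ⟨hk, hlt⟩
    · exact hlow v hv hk
    · by_contra hc
      exact absurd (hmin v ⟨hk, hc⟩) (not_le.2 hlt)
  have hinv : ∀ v : List I, v ≠ [] → v.length ≤ n → co g⁻¹ v = - co g v := by
    intro v hv hl
    have := co_mul g⁻¹ g n hlow v hv hl
    rw [inv_mul_cancel, co_one v hv] at this
    omega
  rcases lt_or_gt_of_ne hw.2 with h | h
  · refine Or.inr ⟨w, hwne, fun v hv hk => ?_, ?_⟩
    · rw [hinv v hv, hbelow v hv hk]; rfl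
      rw [key_lt, hw.1] at hk; omega
    · rw [hinv w hwne hw.1.le]; omega
  · exact Or.inl ⟨w, hwne, hbelow, h⟩

lemma pos_map (ψ : FreeGroup I →* FreeGroup I) (π : I → I) (hπ : StrictMono π)
    (hψ : ∀ i, ∃ c, ψ (FreeGroup.of i) = c * FreeGroup.of (π i) * c⁻¹)
    (g : FreeGroup I) (hg : Pos g) : Pos (ψ g) := by
  obtain ⟨w, w0, w1, w2⟩ := hg
  have hk := co_psi ψ π hψ g w.length (fun u u0 hu => w1 u u0 (key_lt.2 (Or.inl hu))) hπ.injective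
  refine ⟨w.map π, by simpa using w0, fun v v0 hv => ?_, ?_⟩
  · rw [key_lt] at hv
    simp only [List.length_map] at hv
    by_cases hex : ∃ u : List I, v = u.map π
    · obtain ⟨u, rfl⟩ := hex
      rw [(hk _ v0 (by omega)).1 u rfl]
      refine w1 u (by simpa using v0) (key_lt.2 ?_)
      simp only [List.length_map] at hv
      refine hv.imp id (And.imp id fun hlt => ?_)
      rcases lt_trichotomy u w with h | h | h
      · exact h
      · subst h; exact absurd hlt (lt_irrefl _)
      · exact absurd (hlt.trans (List.map_lt (fun x y h => hπ h) h)) (lt_irrefl _)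
    · push Not at hex
      exact (hk v v0 (by omega)).2 hex
  · rw [(hk (w.map π) (by simpa using w0) (by simp)).1 w rfl]; exact w2

end Magnus
namespace Magnus

abbrev F3 := FreeGroup (Fin 3)

/-- exponent of the first generator -/
def ex : F3 →* Multiplicative ℤ :=
  FreeGroup.lift fun k => if k = 0 then Multiplicative.ofAdd 1 else 1

@[simp] lemma ex0 : ex (of 0) = Multiplicative.ofAdd 1 := by simp [ex]
@[simp] lemma ex1 : ex (of 1) = 1 := by simp [ex]
@[simp] lemma ex2 : ex (of 2) = 1 := by simp [ex]

lemma s1_0 : artinS1 (of 0) = of 0 * of 1 * (of 0)⁻¹ := by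
  unfold artinS1; erw [FreeGroup.lift_apply_of]; simp
lemma s1_1 : artinS1 (of 1) = of 0 := by
  unfold artinS1; erw [FreeGroup.lift_apply_of]; simp
lemma s1_2 : artinS1 (of 2) = of 2 := by
  unfold artinS1; erw [FreeGroup.lift_apply_of]; simp
lemma s2_0 : artinS2 (of 0) = of 0 := by
  unfold artinS2; erw [FreeGroup.lift_apply_of]; simp
lemma s2_1 : artinS2 (of 1) = of 1 * of 2 * (of 1)⁻¹ := by
  unfold artinS2; erw [FreeGroup.lift_apply_of]; simp
lemma s2_2 : artinS2 (of 2) = of 1 := by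
  unfold artinS2; erw [FreeGroup.lift_apply_of]; simp
lemma s2i_0 : artinS2Inv (of 0) = of 0 := by
  unfold artinS2Inv; erw [FreeGroup.lift_apply_of]; simp
lemma s2i_1 : artinS2Inv (of 1) = of 2 := by
  unfold artinS2Inv; erw [FreeGroup.lift_apply_of]; simp
lemma s2i_2 : artinS2Inv (of 2) = (of 2)⁻¹ * of 1 * of 2 := by
  unfold artinS2Inv; erw [FreeGroup.lift_apply_of]; simp

lemma end_mul_apply (S T : Monoid.End F3) (x : F3) : (S * T) x = S (T x) := rfl

def yy (s : Bool) : F3 := if s then of 2 else of 1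

lemma ex_yy (s : Bool) : ex (yy s) = 1 := by cases s <;> simp [yy]

def Q (T : Monoid.End F3) (s : Bool) : Prop :=
  T (of 0) = of 0 ∧ (∃ c, ex c = 1 ∧ T (of 1) = c * yy s * c⁻¹) ∧
    (∃ c, ex c = 1 ∧ T (of 2) = c * yy (!s) * c⁻¹)

lemma Q_one : Q 1 false :=
  ⟨rfl, ⟨1, by simp, by simp [yy]⟩, ⟨1, by simp, by simp [yy]⟩⟩

lemma Q_s2 {T : Monoid.End F3} {s : Bool} (h : Q T s) : Q (T * artinS2) (!s) := by
  obtain ⟨h0, ⟨c, hc, h1⟩, ⟨d, hd, h2⟩⟩ := h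
  refine ⟨?_, ⟨T (of 1) * d, ?_, ?_⟩, ⟨c, hc, ?_⟩⟩
  · rw [end_mul_apply, s2_0, h0]
  · rw [h1]; simp [hc, hd, ex_yy]
  · rw [end_mul_apply, s2_1, _root_.map_mul, _root_.map_mul, _root_.map_inv, h2]; group
  · rw [end_mul_apply, s2_2, h1, Bool.not_not]

lemma Q_s2i {T : Monoid.End F3} {s : Bool} (h : Q T s) : Q (T * artinS2Inv) (!s) := by
  obtain ⟨h0, ⟨c, hc, h1⟩, ⟨d, hd, h2⟩⟩ := h
  refine ⟨?_, ⟨d, hd, ?_⟩, ⟨(T (of 2))⁻¹ * c, ?_, ?_⟩⟩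
  · rw [end_mul_apply, s2i_0, h0]
  · rw [end_mul_apply, s2i_1, h2]
  · rw [h2]; simp [hc, hd, ex_yy]
  · rw [end_mul_apply, s2i_2, _root_.map_mul, _root_.map_mul, _root_.map_inv, h1, Bool.not_not]; group

lemma Q_pow {S : Monoid.End F3} (hS : ∀ T s, Q T s → Q (T * S) (!s)) (N : ℕ) :
    ∃ s, Q (S ^ N) s := by
  induction N with
  | zero => exact ⟨false, by simpa using Q_one⟩
  | succ N ih => obtain ⟨s, hs⟩ := ih; exact ⟨!s, by rw [pow_succ]; exact hS _ _ hs⟩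

lemma braid_form (n : ℤ) : ∃ (s : Bool) (c₀ c₁ c₂ : F3), ex c₁ = Multiplicative.ofAdd 1 ∧ ex c₂ = 1 ∧
    braidAction n (of 0) = c₀ * of 0 * c₀⁻¹ ∧ braidAction n (of 1) = c₁ * yy s * c₁⁻¹ ∧
    braidAction n (of 2) = c₂ * yy (!s) * c₂⁻¹ := by
  have key : ∃ T : Monoid.End F3, ∃ s, Q T s ∧ braidAction n = T * artinS1 * artinS1 := by
    unfold braidAction
    split_ifs
    · obtain ⟨s, hs⟩ := Q_pow (fun T s => Q_s2) n.toNat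
      exact ⟨_, s, hs, rfl⟩
    · obtain ⟨s, hs⟩ := Q_pow (fun T s => Q_s2i) (-n).toNat
      exact ⟨_, s, hs, rfl⟩
  obtain ⟨T, s, ⟨h0, ⟨c, hc, h1⟩, ⟨d, hd, h2⟩⟩, hT⟩ := key
  refine ⟨s, of 0 * T (of 1), of 0 * c, d, by simp [hc], hd, ?_, ?_, ?_⟩
  · rw [hT, end_mul_apply, end_mul_apply, s1_0]
    simp only [_root_.map_mul, _root_.map_inv, s1_0, s1_1, h0]; group
  · rw [hT, end_mul_apply, end_mul_apply, s1_1, s1_0]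
    simp only [_root_.map_mul, _root_.map_inv, h0, h1]; group
  · rw [hT, end_mul_apply, end_mul_apply, s1_2, s1_2, h2]

lemma finish (φ : Monoid.End F3) (P : F3 → Prop) (p1 : ¬ P 1) (pm : ∀ a b, P a → P b → P (a * b))
    (pt : ∀ a, a ≠ 1 → P a ∨ P a⁻¹) (pc : ∀ a c, P a → P (c * a * c⁻¹))
    (pf : ∀ a, P a → P (φ a)) :
    ∃ lt : FreeGroup (Fin 3) → FreeGroup (Fin 3) → Prop,
      (∀ a, ¬ lt a a) ∧
      (∀ a b c, lt a b → lt b c → lt a c) ∧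
      (∀ a b, a ≠ b → lt a b ∨ lt b a) ∧
      (∀ a b c, lt a b → lt (c * a) (c * b)) ∧
      (∀ a b c, lt a b → lt (a * c) (b * c)) ∧
      (∀ a b, lt a b ↔ lt (φ a) (φ b)) := by
  refine ⟨fun a b => P (a⁻¹ * b), ?_, ?_, ?_, ?_, ?_, ?_⟩
  · intro a; simpa using p1
  · intro a b c h1 h2
    have := pm _ _ h1 h2
    convert this using 1; group
  · intro a b hab
    rcases pt (a⁻¹ * b) (fun h => hab (inv_mul_eq_one.1 h)) with h | h
    · exact Or.inl h
    · right; convert h using 1; group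
  · intro a b c h; convert h using 1; group
  · intro a b c h
    have := pc _ c⁻¹ h
    convert this using 1; group
  · intro a b
    have e : ∀ a b, (φ a)⁻¹ * φ b = φ (a⁻¹ * b) := by intro a b; simp
    simp only [e]
    refine ⟨pf _, fun h => ?_⟩
    by_contra hn
    by_cases h1 : a⁻¹ * b = 1
    · rw [h1, _root_.map_one] at h; exact p1 h
    · have h2 := pf _ ((pt _ h1).resolve_left hn)
      have := pm _ _ h h2
      rw [_root_.map_inv, mul_inv_cancel] at this
      exact p1 this

/-- index set for the kernel -/
abbrev J := ℤ ×ₗ Bool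

def sh (m : ℤ) : J ≃ J where
  toFun i := toLex ((ofLex i).1 + m, (ofLex i).2)
  invFun i := toLex ((ofLex i).1 - m, (ofLex i).2)
  left_inv i := by simp
  right_inv i := by simp

lemma sh_mono (m : ℤ) : StrictMono (sh m) := by
  intro a b h
  simp only [Prod.Lex.lt_iff] at h
  simp only [sh, Equiv.coe_fn_mk, Prod.Lex.toLex_lt_toLex]
  rcases h with h | ⟨h1, h2⟩
  · left; omega
  · right; exact ⟨by omega, h2⟩

def act : Multiplicative ℤ →* MulAut (FreeGroup J) where
  toFun m := FreeGroup.freeGroupCongr (sh m.toAdd)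
  map_one' := by
    ext x
    induction x using FreeGroup.induction_on with
    | C1 => simp
    | of i => simp [sh]
    | inv_of i h => simp [sh]
    | mul a b ha hb => rw [_root_.map_mul, _root_.map_mul, ha, hb]
  map_mul' m k := by
    ext x
    induction x using FreeGroup.induction_on with
    | C1 => simp
    | of i => simp [sh, add_assoc, add_comm]
    | inv_of i h => simp [sh, add_assoc, add_comm]
    | mul a b ha hb => 
      exact (_root_.map_mul (freeGroupCongr (sh (Multiplicative.toAdd (m * k)))) a b).trans
        ((congrArg₂ (· * ·) ha hb).trans (_root_.map_mul _ a b).symm)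

lemma act_of (m : Multiplicative ℤ) (i : J) : act m (of i) = of (sh m.toAdd i) := by
  simp [act]

abbrev SD := FreeGroup J ⋊[act] Multiplicative ℤ

def th : F3 →* SD := FreeGroup.lift fun k =>
  if k = 0 then SemidirectProduct.inr (Multiplicative.ofAdd 1)
  else if k = 1 then SemidirectProduct.inl (of (toLex (0, true)))
  else SemidirectProduct.inl (of (toLex (0, false)))

lemma th0 : th (of 0) = SemidirectProduct.inr (Multiplicative.ofAdd 1) := by simp [th]
lemma th1 : th (of 1) = SemidirectProduct.inl (of (toLex (0, true))) := by simp [th]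
lemma th2 : th (of 2) = SemidirectProduct.inl (of (toLex (0, false))) := by simp [th]

lemma th_yy (s : Bool) : th (yy s) = SemidirectProduct.inl (of (toLex (0, !s))) := by
  cases s <;> simp [yy, th1, th2]

lemma th_right (g : F3) : (th g).right = ex g := by
  have : SemidirectProduct.rightHom.comp th = ex := by
    ext k
    fin_cases k
    · simp [th0]
    · simp [th1]
    · simp [th2]
  exact DFunLike.congr_fun this g

def f1 : FreeGroup J →* F3 := FreeGroup.lift fun i =>
  of 0 ^ (ofLex i).1 * yy (!(ofLex i).2) * (of 0 ^ (ofLex i).1)⁻¹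

lemma f1_of (m : ℤ) (b : Bool) :
    f1 (of (toLex (m, b))) = of 0 ^ m * yy (!b) * (of 0 ^ m)⁻¹ := by simp [f1]

def thinv : SD →* F3 := SemidirectProduct.lift f1 (zpowersHom F3 (of 0)) (by
  intro m
  ext i
  obtain ⟨m', b⟩ := i
  change f1 (act m (of (toLex (m', b)))) = MulAut.conj _ (f1 (of (toLex (m', b))))
  rw [act_of, MulAut.conj_apply]
  simp only [sh, Equiv.coe_fn_mk, ofLex_toLex, f1_of, zpowersHom_apply]
  rw [add_comm, zpow_add]; group)

lemma thinv_th (g : F3) : thinv (th g) = g := by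
  have : thinv.comp th = MonoidHom.id _ := by
    ext k
    fin_cases k
    · simp [th0, thinv]
    · simp [th1, thinv, f1_of, yy]
    · simp [th2, thinv, f1_of, yy]
  exact DFunLike.congr_fun this g

/-- the image of a kernel element -/
lemma th_ker (g : F3) (hg : ex g = 1) : th g = SemidirectProduct.inl (th g).left := by
  ext
  · simp
  · simp [th_right, hg]

lemma f1_left (g : F3) (hg : ex g = 1) : f1 (th g).left = g := by
  have h := thinv_th g
  rw [th_ker g hg] at h
  simpa [thinv] using h

lemma left_mul (g h : F3) (hg : ex g = 1) : (th (g * h)).left = (th g).left * (th h).left := by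
  rw [_root_.map_mul, SemidirectProduct.mul_left, th_right, hg]; simp

lemma conj_left (h : SD) (a : FreeGroup J) :
    h * SemidirectProduct.inl a * h⁻¹ =
      SemidirectProduct.inl (h.left * act h.right a * h.left⁻¹) := by
  ext
  · simp [SemidirectProduct.mul_left, SemidirectProduct.inv_left]
  · simp

def P' (g : F3) : Prop :=
  0 < (ex g).toAdd ∨ (ex g = 1 ∧ Pos (th g).left)

def pi' (i : J) : J := if (ofLex i).2 then toLex ((ofLex i).1 + 1, false) else toLex ((ofLex i).1, true)

lemma pi'_mono : StrictMono pi' := by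
  rintro ⟨m, b⟩ ⟨m', b'⟩ h
  change toLex (m, b) < toLex (m', b') at h
  change pi' (toLex (m, b)) < pi' (toLex (m', b'))
  rw [Prod.Lex.toLex_lt_toLex] at h
  cases b <;> cases b' <;> simp [pi', Prod.Lex.toLex_lt_toLex] at h ⊢
  all_goals first | omega | skip
  rcases h with h | ⟨-, h⟩
  · omega
  · exact absurd h (by decide)

lemma odd_case (φ : Monoid.End F3) (c₀ c₁ c₂ : F3) (e1 : ex c₁ = Multiplicative.ofAdd 1)
    (e2 : ex c₂ = 1) (h0 : φ (of 0) = c₀ * of 0 * c₀⁻¹) (h1 : φ (of 1) = c₁ * yy true * c₁⁻¹)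
    (h2 : φ (of 2) = c₂ * yy false * c₂⁻¹) (g : F3) (hg : P' g) : P' (φ g) := by
  have hex : ∀ g, ex (φ g) = ex g := by
    intro g
    have : ex.comp φ = ex := by
      refine FreeGroup.ext_hom _ _ fun k => ?_
      fin_cases k
      · change ex (φ (of 0)) = ex (of 0); simp [h0]
      · change ex (φ (of 1)) = ex (of 1); simp [h1, ex_yy]
      · change ex (φ (of 2)) = ex (of 2); simp [h2, ex_yy]
    exact DFunLike.congr_fun this g
  rcases hg with hg | ⟨hg, hp⟩
  · left; rwa [hex]
  · right
    refine ⟨by rw [hex, hg], ?_⟩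
    have hform : ∀ i : J, ∃ c, th (φ (f1 (of i))) =
        SemidirectProduct.inl (c * of (pi' i) * c⁻¹) := by
      rintro ⟨m, b⟩
      change ∃ c, th (φ (f1 (of (toLex (m, b))))) =
        SemidirectProduct.inl (c * of (pi' (toLex (m, b))) * c⁻¹)
      have hx : ∃ h : F3, (ex h).toAdd = (if b then m + 1 else m) ∧
          φ (f1 (of (toLex (m, b)))) = h * yy b * h⁻¹ := by
        cases b
        · refine ⟨φ (of 0) ^ m * c₂, ?_, ?_⟩
          · simp [hex, e2]
          · rw [f1_of]
            simp only [Bool.not_false, _root_.map_mul, _root_.map_inv, map_zpow]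
            change φ (of 0) ^ m * φ (of 2) * _ = _
            rw [h2]; group
        · refine ⟨φ (of 0) ^ m * c₁, ?_, ?_⟩
          · simp [hex, e1]
          · rw [f1_of]
            simp only [Bool.not_true, _root_.map_mul, _root_.map_inv, map_zpow]
            change φ (of 0) ^ m * φ (of 1) * _ = _
            rw [h1]; group
      obtain ⟨h, hh, hf⟩ := hx
      refine ⟨(th h).left, ?_⟩
      rw [hf, _root_.map_mul, _root_.map_mul, _root_.map_inv, th_yy, conj_left, act_of, th_right, hh]
      cases b <;> simp [sh, pi']
    choose c hc using hform
    let ψ : FreeGroup J →* FreeGroup J := FreeGroup.lift fun i => c i * of (pi' i) * (c i)⁻¹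
    have hψ : ∀ a, th (φ (f1 a)) = SemidirectProduct.inl (ψ a) := by
      intro a
      have : (th.comp (MonoidHom.comp φ f1)) = SemidirectProduct.inl.comp ψ := by
        refine FreeGroup.ext_hom _ _ fun i => ?_
        change th (φ (f1 (of i))) = SemidirectProduct.inl (ψ (of i))
        rw [hc i]; simp [ψ]
      exact DFunLike.congr_fun this a
    have h3 : (th (φ g)).left = ψ (th g).left := by
      conv_lhs => rw [← f1_left g hg]
      rw [hψ]; simp
    rw [h3]
    exact pos_map ψ pi' pi'_mono (fun i => ⟨c i, by simp [ψ]⟩) _ hp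

lemma P'_conj (g h : F3) (hg : P' g) : P' (h * g * h⁻¹) := by
  have he : ex (h * g * h⁻¹) = ex g := by simp
  rcases hg with hg | ⟨hg, hp⟩
  · left; rwa [he]
  · right
    refine ⟨by rw [he, hg], ?_⟩
    rw [_root_.map_mul, _root_.map_mul, _root_.map_inv, th_ker g hg, conj_left, SemidirectProduct.left_inl]
    exact pos_map ((MulAut.conj (th h).left).toMonoidHom.comp (act (th h).right).toMonoidHom)
      (sh (th h).right.toAdd) (sh_mono _) (fun i => ⟨(th h).left, by simp [act_of]⟩) _ hp

lemma P'_mul (g h : F3) (hg : P' g) (hh : P' h) : P' (g * h) := by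
  rcases hg with hg | ⟨hg, hp⟩ <;> rcases hh with hh | ⟨hh, hq⟩
  · left; rw [_root_.map_mul, toAdd_mul]; omega
  · left; rw [_root_.map_mul, hh, mul_one]; exact hg
  · left; rw [_root_.map_mul, hg, one_mul]; exact hh
  · right; exact ⟨by rw [_root_.map_mul, hg, hh, mul_one], by rw [left_mul g h hg]; exact pos_mul hp hq⟩

lemma P'_total (g : F3) (hg : g ≠ 1) : P' g ∨ P' g⁻¹ := by
  rcases lt_trichotomy (0 : ℤ) (ex g).toAdd with h | h | h
  · exact Or.inl (Or.inl h)
  · have he : ex g = 1 := h.symm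
    have hl : (th g).left ≠ 1 := by
      intro h1
      have := f1_left g he
      rw [h1, _root_.map_one] at this
      exact hg this.symm
    have hi : (th g⁻¹).left = (th g).left⁻¹ := by
      rw [eq_inv_iff_mul_eq_one, ← left_mul _ _ (by simp [he])]; simp
    rcases pos_total _ hl with h | h
    · exact Or.inl (Or.inr ⟨he, h⟩)
    · exact Or.inr (Or.inr ⟨by simp [he], by rwa [hi]⟩)
  · right; left; rw [_root_.map_inv, toAdd_inv]; omega

lemma not_P'_one : ¬ P' 1 := by
  rintro (h | ⟨-, h⟩)
  · simp at h
  · rw [_root_.map_one] at h; exact not_pos_one h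

end Magnus

/-- For every integer `n`, the braid `σ₁² σ₂ⁿ ∈ B₃` is order-preserving: the induced
automorphism of `F₃` preserves some bi-ordering of `F₃`. -/
theorem stmt16 (n : ℤ) :
    ∃ lt : FreeGroup (Fin 3) → FreeGroup (Fin 3) → Prop,
      (∀ a, ¬ lt a a) ∧
      (∀ a b c, lt a b → lt b c → lt a c) ∧
      (∀ a b, a ≠ b → lt a b ∨ lt b a) ∧
      (∀ a b c, lt a b → lt (c * a) (c * b)) ∧
      (∀ a b c, lt a b → lt (a * c) (b * c)) ∧
      (∀ a b, lt a b ↔ lt (braidAction n a) (braidAction n b)) := by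
  obtain ⟨s, c₀, c₁, c₂, e1, e2, h0, h1, h2⟩ := Magnus.braid_form n
  cases s with
  | false =>
    refine Magnus.finish (braidAction n) Magnus.Pos Magnus.not_pos_one
      (fun a b => Magnus.pos_mul) Magnus.pos_total (fun a c h => ?_) (fun a h => ?_)
    · exact Magnus.pos_map (MulAut.conj c).toMonoidHom id strictMono_id
        (fun i => ⟨c, by simp⟩) a h
    · refine Magnus.pos_map (braidAction n) id strictMono_id (fun i => ?_) a h
      fin_cases i
      · exact ⟨c₀, h0⟩
      · exact ⟨c₁, h1⟩
      · exact ⟨c₂, h2⟩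
  | true =>
    exact Magnus.finish (braidAction n) Magnus.P' Magnus.not_P'_one Magnus.P'_mul
      Magnus.P'_total Magnus.P'_conj (Magnus.odd_case _ c₀ c₁ c₂ e1 e2 h0 h1 h2)
end
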